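/- arXiv:1805.03382 — 4 statements merged into one kernel-verified Lean document; each statement's English description precedes it below -/
import Mathlib

section
/- Let c > 4/3. Every incentive compatible and individually rational direct mechanism on the triangle T = {(v1,v2) : v1 ≥ 0, v2 ≥ 0, v1/c + v2 ≤ 1} with the uniform distribution μ on T has revenue at most (2/27)*(4 + c + sqrt(c*(c−1))). -/
open MeasureTheory Real

noncomputable section

/-- Utility of a buyer with value `v = (v₁, v₂)` for a menu item
`it = ((x₁, x₂), p)`, namely `v₁ * x₁ + v₂ * x₂ - p`. -/
def util (v : ℝ × ℝ) (it : (ℝ × ℝ) × ℝ) : ℝ :=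
  v.1 * it.1.1 + v.2 * it.1.2 - it.2

/-- `M` is a menu: every item has allocation in `[0,1]²` and nonnegative price,
and the zero item `((0,0),0)` belongs to `M`. -/
def IsMenu (M : Finset ((ℝ × ℝ) × ℝ)) : Prop :=
  (((0 : ℝ), (0 : ℝ)), (0 : ℝ)) ∈ M ∧
    ∀ it ∈ M, it.1.1 ∈ Set.Icc (0 : ℝ) 1 ∧ it.1.2 ∈ Set.Icc (0 : ℝ) 1 ∧ 0 ≤ it.2

/-- The price paid by a buyer with value `v`: the highest price among the
utility-maximizing menu items of `M`. -/
def buyerPrice (M : Finset ((ℝ × ℝ) × ℝ)) (v : ℝ × ℝ) : ℝ :=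
  sSup {p : ℝ | ∃ it ∈ M, it.2 = p ∧ ∀ it' ∈ M, util v it' ≤ util v it}

/-- Revenue of the menu `M` under the uniform distribution on `[0,1]²`. -/
def rev (M : Finset ((ℝ × ℝ) × ℝ)) : ℝ :=
  ∫ v in Set.Icc ((0 : ℝ), (0 : ℝ)) ((1 : ℝ), (1 : ℝ)), buyerPrice M v

/-- The triangle `T = {(v₁,v₂) : v₁ ≥ 0, v₂ ≥ 0, v₁/c + v₂ ≤ 1}`. -/
def Tri (c : ℝ) : Set (ℝ × ℝ) := {v | 0 ≤ v.1 ∧ 0 ≤ v.2 ∧ v.1 / c + v.2 ≤ 1}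

/-- The uniform probability measure on the triangle `Tri c`, i.e. the measure
with density `2 / c` with respect to Lebesgue measure, restricted to `Tri c`. -/
def triMeasure (c : ℝ) : Measure (ℝ × ℝ) :=
  ENNReal.ofReal (2 / c) • (volume.restrict (Tri c))

/-- Revenue of the menu `M` under the uniform distribution on the triangle `Tri c`. -/
def revTri (c : ℝ) (M : Finset ((ℝ × ℝ) × ℝ)) : ℝ :=
  ∫ v, buyerPrice M v ∂(triMeasure c)

lemma u_exists (c : ℝ) (hc : 0 < c)
    (x : ℝ × ℝ → ℝ × ℝ) (p : ℝ × ℝ → ℝ)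
    (hx : ∀ v ∈ Tri c, (x v).1 ∈ Set.Icc (0 : ℝ) 1 ∧ (x v).2 ∈ Set.Icc (0 : ℝ) 1)
    (hIC : ∀ v ∈ Tri c, ∀ v' ∈ Tri c,
      v.1 * (x v').1 + v.2 * (x v').2 - p v' ≤ v.1 * (x v).1 + v.2 * (x v).2 - p v)
    (hIR : ∀ v ∈ Tri c, 0 ≤ v.1 * (x v).1 + v.2 * (x v).2 - p v) :
    ∃ u : ℝ × ℝ → ℝ, Continuous u ∧ (∀ v ∈ Tri c, 0 ≤ u v) ∧
      (∀ v w : ℝ × ℝ, v.1 ≤ w.1 → v.2 ≤ w.2 → u w ≤ u v + (w.1 - v.1) + (w.2 - v.2)) ∧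
      (∀ v ∈ Tri c, ∀ ε : ℝ, u v + ε * (p v + u v) ≤ u ((1 + ε) * v.1, (1 + ε) * v.2)) := by
  have h0 : ((0 : ℝ), (0 : ℝ)) ∈ Tri c := by simp [Tri]
  haveI : Nonempty (Tri c) := ⟨⟨_, h0⟩⟩
  let F : ℝ × ℝ → Tri c → ℝ := fun v v' => v.1 * (x v').1 + v.2 * (x v').2 - p v'
  let u : ℝ × ℝ → ℝ := fun v => ⨆ v', F v v'
  have hp : ∀ v ∈ Tri c, p (0, 0) ≤ p v := by
    intro v hv
    have := hIC _ h0 v hv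
    simp at this
    linarith
  have key : ∀ a y : ℝ, y ∈ Set.Icc (0 : ℝ) 1 → a * y ≤ max a 0 := by
    intro a y hy
    rcases le_total a 0 with h | h
    · rw [max_eq_right h]; exact mul_nonpos_of_nonpos_of_nonneg h hy.1
    · rw [max_eq_left h]; exact mul_le_of_le_one_right h hy.2
  have hbdd : ∀ v, BddAbove (Set.range (F v)) := by
    intro v
    refine ⟨max v.1 0 + max v.2 0 - p (0, 0), ?_⟩
    rintro _ ⟨⟨v', hv'⟩, rfl⟩
    have := hp v' hv'
    have h1 := key v.1 _ (hx v' hv').1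
    have h2 := key v.2 _ (hx v' hv').2
    simp only [F]
    linarith
  have hLip : ∀ v w : ℝ × ℝ, u w ≤ u v + max (w.1 - v.1) 0 + max (w.2 - v.2) 0 := by
    intro v w
    refine ciSup_le ?_
    rintro ⟨v', hv'⟩
    have h3 : F v ⟨v', hv'⟩ ≤ u v := le_ciSup (hbdd v) _
    have h1 := key (w.1 - v.1) _ (hx v' hv').1
    have h2 := key (w.2 - v.2) _ (hx v' hv').2
    simp only [F] at h3 ⊢
    nlinarith
  have hu : ∀ v ∈ Tri c, u v = v.1 * (x v).1 + v.2 * (x v).2 - p v := by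
    intro v hv
    apply le_antisymm
    · exact ciSup_le fun v' => hIC v hv v' v'.2
    · exact le_ciSup (hbdd v) ⟨v, hv⟩
  refine ⟨u, ?_, ?_, ?_, ?_⟩
  · have : LipschitzWith 2 u := by
      apply LipschitzWith.of_le_add_mul
      intro v w
      have := hLip w v
      have h1 : max (v.1 - w.1) 0 ≤ dist v w :=
        max_le ((le_abs_self _).trans (le_max_left _ _)) dist_nonneg
      have h2 : max (v.2 - w.2) 0 ≤ dist v w :=
        max_le ((le_abs_self _).trans (le_max_right _ _)) dist_nonneg
      push_cast
      linarith
    exact this.continuous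
  · intro v hv
    rw [hu v hv]; exact hIR v hv
  · intro v w h1 h2
    have := hLip v w
    rwa [max_eq_left (by linarith), max_eq_left (by linarith)] at this
  · intro v hv ε
    have h3 : F ((1 + ε) * v.1, (1 + ε) * v.2) ⟨v, hv⟩ ≤ u ((1 + ε) * v.1, (1 + ε) * v.2) :=
      le_ciSup (hbdd _) _
    rw [hu v hv]
    simp only [F] at h3
    nlinarith

lemma cov_aux (S : Set (ℝ × ℝ)) (hS : MeasurableSet S) (f₁ f₂ : ℝ × ℝ → ℝ)
    (p q r s : ℝ × ℝ → ℝ)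
    (h₁ : ∀ z ∈ S, HasFDerivAt f₁ (p z • ContinuousLinearMap.fst ℝ ℝ ℝ + q z • ContinuousLinearMap.snd ℝ ℝ ℝ) z)
    (h₂ : ∀ z ∈ S, HasFDerivAt f₂ (r z • ContinuousLinearMap.fst ℝ ℝ ℝ + s z • ContinuousLinearMap.snd ℝ ℝ ℝ) z)
    (hinj : Set.InjOn (fun z => (f₁ z, f₂ z)) S) (g : ℝ × ℝ → ℝ) :
    ∫ v in (fun z => (f₁ z, f₂ z)) '' S, g v
      = ∫ z in S, |p z * s z - q z * r z| * g (f₁ z, f₂ z) := by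
  let D : ℝ × ℝ → (ℝ × ℝ →L[ℝ] ℝ × ℝ) := fun z =>
    (p z • ContinuousLinearMap.fst ℝ ℝ ℝ + q z • ContinuousLinearMap.snd ℝ ℝ ℝ).prod
    (r z • ContinuousLinearMap.fst ℝ ℝ ℝ + s z • ContinuousLinearMap.snd ℝ ℝ ℝ)
  have hdet : ∀ z, (D z).det = p z * s z - q z * r z := by
    intro z
    have : D z = LinearMap.toContinuousLinearMap (Matrix.toLin (Module.Basis.finTwoProd ℝ)
      (Module.Basis.finTwoProd ℝ) !![p z, q z; r z, s z]) := by
      ext <;> simp [D, Matrix.toLin_finTwoProd_apply]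
    rw [this, LinearMap.det_toContinuousLinearMap, LinearMap.det_toLin, Matrix.det_fin_two_of]
  rw [integral_image_eq_integral_abs_det_fderiv_smul volume hS
    (fun z hz => ((h₁ z hz).prodMk (h₂ z hz)).hasFDerivWithinAt) hinj]
  refine integral_congr_ae (Filter.Eventually.of_forall fun z => ?_)
  have := hdet z
  simp only [D] at this
  simp only [this, smul_eq_mul]

/-- polar-like coordinates on the triangle -/
lemma tri_int (c : ℝ) (hc : 0 < c) (g : ℝ × ℝ → ℝ) :
    ∫ v in Tri c, g v = ∫ z in Set.Icc (0:ℝ) 1 ×ˢ Set.Ioc (0:ℝ) 1,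
      c * z.2 * g (z.2 * (c * z.1), z.2 * (1 - z.1)) := by
  set S : Set (ℝ × ℝ) := Set.Icc (0:ℝ) 1 ×ˢ Set.Ioc (0:ℝ) 1 with hS
  have hSm : MeasurableSet S := measurableSet_Icc.prod measurableSet_Ioc
  have himg : (fun z : ℝ × ℝ => (z.2 * (c * z.1), z.2 * (1 - z.1))) '' S = Tri c \ {0} := by
    ext ⟨a, b⟩
    constructor
    · rintro ⟨⟨s, r⟩, ⟨⟨h1, h2⟩, h3, h4⟩, h⟩
      simp only [Prod.mk.injEq] at h h1 h2 h3 h4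
      obtain ⟨rfl, rfl⟩ := h
      refine ⟨⟨by positivity, mul_nonneg h3.le (by linarith), ?_⟩, ?_⟩
      · simp only
        have : r * (c * s) / c = r * s := by field_simp
        rw [this]; linarith
      · intro h
        simp only [Set.mem_singleton_iff, Prod.mk_eq_zero] at h
        obtain ⟨ha, hb⟩ := h
        have h5 : s = 0 := by
          rcases mul_eq_zero.1 ha with h | h
          · linarith
          · rcases mul_eq_zero.1 h with h | h <;> linarith
        subst h5
        linarith
    · rintro ⟨⟨h1, h2, h3⟩, h4⟩
      simp only at h1 h2 h3
      have hpos : 0 < a / c + b := by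
        have : 0 ≤ a / c := by positivity
        rcases (add_nonneg this h2).lt_or_eq with h | h
        · exact h
        · exfalso; apply h4
          have hb : b = 0 := by linarith
          have ha : a / c = 0 := by linarith
          have : a = 0 := by
            rcases div_eq_zero_iff.1 ha with h | h <;> linarith
          simp [ha, hb, this]
      have h5 : 0 ≤ a / c := by positivity
      refine ⟨(a / c / (a / c + b), a / c + b), ⟨⟨by positivity, ?_⟩, hpos, h3⟩, ?_⟩
      · simp only; rw [div_le_one hpos]; linarith
      · have := hpos.ne'
        simp only [Prod.mk.injEq]
        constructor
        · calc (a / c + b) * (c * (a / c / (a / c + b))) 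
              = c * (a/c) * ((a / c + b) / (a/c+b)) := by ring
            _ = a := by rw [div_self this]; field_simp
        · calc (a / c + b) * (1 - a / c / (a / c + b))
              = (a / c + b) - (a/c) * ((a / c + b) / (a/c+b)) := by ring
            _ = b := by rw [div_self this]; ring
  have hinj : Set.InjOn (fun z : ℝ × ℝ => (z.2 * (c * z.1), z.2 * (1 - z.1))) S := by
    rintro ⟨s, r⟩ ⟨_, h3, _⟩ ⟨s', r'⟩ _ h
    simp only [Prod.mk.injEq] at h h3 ⊢
    obtain ⟨ha, hb⟩ := h
    have h6 : r * s = r' * s' := by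
      have : c * (r * s) = c * (r' * s') := by linarith
      exact mul_left_cancel₀ hc.ne' this
    have h7 : r = r' := by linarith
    subst h7
    exact ⟨mul_left_cancel₀ h3.ne' h6, rfl⟩
  have hae : ∫ v in Tri c, g v = ∫ v in Tri c \ {0}, g v :=
    (setIntegral_congr_set (sdiff_null_ae_eq_self (by simp))).symm
  rw [hae, ← himg]
  rw [cov_aux S hSm (fun z => z.2 * (c * z.1)) (fun z => z.2 * (1 - z.1))
    (fun z => c * z.2) (fun z => c * z.1) (fun z => - z.2) (fun z => 1 - z.1) _ _ hinj]
  · refine setIntegral_congr_fun hSm ?_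
    rintro ⟨s, r⟩ ⟨_, h3, _⟩
    simp only at h3 ⊢
    have : c * r * (1 - s) - c * s * -r = c * r := by ring
    rw [this, abs_of_pos (by positivity)]
  · intro z _
    have h := (hasFDerivAt_snd (𝕜 := ℝ) (p := z)).mul ((hasFDerivAt_fst (𝕜 := ℝ) (p := z)).const_mul c)
    exact h.congr_fderiv (by ext <;> simp <;> ring)
  · intro z _
    have h := (hasFDerivAt_snd (𝕜 := ℝ) (p := z)).mul ((hasFDerivAt_fst (𝕜 := ℝ) (p := z)).const_sub 1)
    exact h.congr_fderiv (by ext <;> simp)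

lemma tri_meas (c : ℝ) : MeasurableSet (Tri c) := by
  have : IsClosed (Tri c) := by
    have h1 : IsClosed {v : ℝ × ℝ | 0 ≤ v.1} := isClosed_le continuous_const continuous_fst
    have h2 : IsClosed {v : ℝ × ℝ | 0 ≤ v.2} := isClosed_le continuous_const continuous_snd
    have h3 : IsClosed {v : ℝ × ℝ | v.1 / c + v.2 ≤ 1} :=
      isClosed_le (by fun_prop) continuous_const
    exact h1.inter (h2.inter h3)
  exact this.measurableSet

lemma tri_integrable (c : ℝ) (hc : 0 < c) (g : ℝ × ℝ → ℝ) (hg : Continuous g) :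
    IntegrableOn g (Tri c) := by
  have hK : IsCompact (Set.Icc (0:ℝ) c ×ˢ Set.Icc (0:ℝ) 1) := isCompact_Icc.prod isCompact_Icc
  refine (hg.continuousOn.integrableOn_compact hK).mono_set ?_
  rintro ⟨a, b⟩ ⟨h1, h2, h3⟩
  simp only at h1 h2 h3
  have h5 : 0 ≤ a / c := by positivity
  have : a / c ≤ 1 := by linarith
  rw [div_le_one hc] at this
  exact ⟨⟨h1, this⟩, h2, by linarith⟩

lemma claimA (c : ℝ) (hc : 0 < c) (u p : ℝ × ℝ → ℝ) (hu : Continuous u)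
    (hsub : ∀ v ∈ Tri c, ∀ ε : ℝ, u v + ε * (p v + u v) ≤ u ((1 + ε) * v.1, (1 + ε) * v.2))
    (hp : IntegrableOn p (Tri c)) :
    ∫ v in Tri c, p v ≤ c * (∫ s in (0:ℝ)..1, u (c * s, 1 - s)) - 3 * ∫ v in Tri c, u v := by
  let K : ℝ → ℝ := fun τ => ∫ s in (0:ℝ)..1, u (τ * (c * s), τ * (1 - s))
  have hK : Continuous K := by
    apply intervalIntegral.continuous_parametric_intervalIntegral_of_continuous'
    simp only [Function.uncurry_def]
    fun_prop
  let G : ℝ → ℝ := fun l => ∫ v in Tri c, u (l * v.1, l * v.2)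
  have hG : ∀ l : ℝ, 0 < l → G l = c * (l⁻¹ ^ 2 * ∫ τ in (0:ℝ)..l, τ * K τ) := by
    intro l hl
    have e1 : G l = ∫ ρ in Set.Ioc (0:ℝ) 1, ∫ s in Set.Icc (0:ℝ) 1,
        c * ρ * u (l * (ρ * (c * s)), l * (ρ * (1 - s))) := by
      simp only [G]
      rw [tri_int c hc]
      rw [Measure.volume_eq_prod, ← Measure.prod_restrict, integral_prod_symm]
      rw [Measure.prod_restrict, ← Measure.volume_eq_prod]
      have hK : IsCompact (Set.Icc (0:ℝ) 1 ×ˢ Set.Icc (0:ℝ) 1) := isCompact_Icc.prod isCompact_Icc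
      have : Continuous fun z : ℝ × ℝ => c * z.2 * u (l * (z.2 * (c * z.1)), l * (z.2 * (1 - z.1))) := by
        fun_prop
      exact (this.continuousOn.integrableOn_compact hK).mono_set
        (Set.prod_mono le_rfl Set.Ioc_subset_Icc_self)
    have e2 : G l = ∫ ρ in (0:ℝ)..1, c * ρ * K (l * ρ) := by
      rw [e1, intervalIntegral.integral_of_le zero_le_one]
      congr 1
      ext ρ
      simp only [K]
      rw [intervalIntegral.integral_of_le zero_le_one, ← integral_Icc_eq_integral_Ioc,
        ← integral_const_mul]
      simp only [mul_assoc]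
    have e3 := intervalIntegral.integral_comp_mul_left (a := 0) (b := 1) (fun τ => τ * K τ) hl.ne'
    rw [mul_zero, mul_one, smul_eq_mul] at e3
    rw [e2, pow_two, mul_assoc, ← e3, ← intervalIntegral.integral_const_mul,
      ← intervalIntegral.integral_const_mul]
    congr 1
    ext ρ
    field_simp
  have hG1 : G 1 = ∫ v in Tri c, u v := by simp [G]
  have hder : HasDerivAt G (c * K 1 - 2 * G 1) 1 := by
    have hcont : Continuous fun τ => τ * K τ := by fun_prop
    have d1 : HasDerivAt (fun l => ∫ τ in (0:ℝ)..l, τ * K τ) (1 * K 1) 1 :=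
      intervalIntegral.integral_hasDerivAt_right (hcont.intervalIntegrable _ _)
        (hcont.stronglyMeasurableAtFilter _ _) hcont.continuousAt
    have d2 : HasDerivAt (fun l : ℝ => l⁻¹ ^ 2) (-2) 1 := by
      have := (hasDerivAt_inv (one_ne_zero (α := ℝ))).pow 2
      exact this.congr_deriv (by norm_num)
    have d3 := (d2.mul d1).const_mul c
    have d4 : HasDerivAt G _ 1 := d3.congr_of_eventuallyEq (by
      filter_upwards [lt_mem_nhds (zero_lt_one (α := ℝ))] with l hl
      exact hG l hl)
    convert d4 using 1
    rw [hG 1 one_pos]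
    simp
    ring
  have hineq : ∀ ε : ℝ, 0 < ε → (∫ v in Tri c, p v) + G 1 ≤ ε⁻¹ • (G (1 + ε) - G 1) := by
    intro ε hε
    have hui := tri_integrable c hc u hu
    have h1 : ∫ v in Tri c, (u v + ε * (p v + u v)) ≤ G (1 + ε) := by
      refine setIntegral_mono_on (hui.add ((hp.add hui).const_mul ε)) ?_ (tri_meas c)
        (fun v hv => hsub v hv ε)
      exact tri_integrable c hc _ (by fun_prop)
    have h2 : ∫ v in Tri c, (u v + ε * (p v + u v)) = G 1 + ε * ((∫ v in Tri c, p v) + G 1) := by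
      rw [hG1, ← integral_add hp hui, ← integral_const_mul]
      exact integral_add hui ((hp.add hui).const_mul ε)
    rw [h2] at h1
    rw [smul_eq_mul, inv_mul_eq_div, le_div_iff₀ hε]
    linarith
  have hlim := (hasDerivAt_iff_tendsto_slope_zero.1 hder).mono_left
    (nhdsWithin_mono 0 (fun x (hx : x ∈ Set.Ioi (0:ℝ)) => (ne_of_gt hx : x ≠ 0)))
  have := ge_of_tendsto hlim (by
    filter_upwards [self_mem_nhdsWithin] with ε hε
    exact hineq ε hε)
  have hK1 : K 1 = ∫ s in (0:ℝ)..1, u (c * s, 1 - s) := by simp [K]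
  rw [← hG1, ← hK1]
  linarith

lemma fan (c : ℝ) (hc : 0 < c) (u : ℝ × ℝ → ℝ) (hu : Continuous u)
    (hLip : ∀ v w : ℝ × ℝ, v.1 ≤ w.1 → v.2 ≤ w.2 → u w ≤ u v + (w.1 - v.1) + (w.2 - v.2))
    (a b : ℝ) (hab : a ≤ b) (X Y X' Y' A B N : ℝ → ℝ)
    (hX : ∀ s ∈ Set.Ioo a b, HasDerivAt X (X' s) s)
    (hY : ∀ s ∈ Set.Ioo a b, HasDerivAt Y (Y' s) s)
    (hXc : ContinuousOn X (Set.Icc a b)) (hYc : ContinuousOn Y (Set.Icc a b))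
    (hAc : ContinuousOn A (Set.Icc a b)) (hBc : ContinuousOn B (Set.Icc a b))
    (hXs : ∀ s ∈ Set.Ioo a b, X s ≤ s) (hYs : ∀ s ∈ Set.Ioo a b, Y s ≤ 1 - s)
    (hA : ∀ s ∈ Set.Ioo a b, 0 ≤ A s) (hB : ∀ s ∈ Set.Ioo a b, 0 ≤ B s)
    (hAB : ∀ s ∈ Set.Ioo a b, A s + B s / 2 = 1 / 3)
    (hJ : ∀ s ∈ Set.Ioo a b, ∀ r ∈ Set.Ioo (0:ℝ) 1,
      ((1 - r) * X' s + r) * (1 - s - Y s) - (s - X s) * ((1 - r) * Y' s - r) = A s + B s * r)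
    (hN : ∀ s ∈ Set.Ioo a b, (c * (s - X s) + (1 - s - Y s)) * (A s / 2 + B s / 6) = N s)
    (hNc : Continuous N)
    (hinj : Set.InjOn (fun z : ℝ × ℝ => (c * ((1 - z.2) * X z.1 + z.2 * z.1),
      (1 - z.2) * Y z.1 + z.2 * (1 - z.1))) (Set.Ioo a b ×ˢ Set.Ioo (0:ℝ) 1)) :
    c / 3 * (∫ s in a..b, u (c * s, 1 - s)) - c * (∫ s in a..b, N s) ≤
    ∫ v in (fun z : ℝ × ℝ => (c * ((1 - z.2) * X z.1 + z.2 * z.1),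
      (1 - z.2) * Y z.1 + z.2 * (1 - z.1))) '' (Set.Ioo a b ×ˢ Set.Ioo (0:ℝ) 1), u v := by
  set S : Set (ℝ × ℝ) := Set.Ioo a b ×ˢ Set.Ioo (0:ℝ) 1 with hS
  have hSm : MeasurableSet S := measurableSet_Ioo.prod measurableSet_Ioo
  set S' : Set (ℝ × ℝ) := Set.Icc a b ×ˢ Set.Icc (0:ℝ) 1 with hS'
  have hSS' : S ⊆ S' := Set.prod_mono Set.Ioo_subset_Icc_self Set.Ioo_subset_Icc_self
  have hK : IsCompact S' := isCompact_Icc.prod isCompact_Icc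
  have lift : ∀ f : ℝ → ℝ, ContinuousOn f (Set.Icc a b) → ContinuousOn (fun z : ℝ × ℝ => f z.1) S' :=
    fun f hf => hf.comp continuousOn_fst (fun z hz => hz.1)
  have lX := lift X hXc
  have lY := lift Y hYc
  have lA := lift A hAc
  have lB := lift B hBc
  have lJ : ContinuousOn (fun z : ℝ × ℝ => c * (A z.1 + B z.1 * z.2)) S' :=
    continuousOn_const.mul (lA.add (lB.mul continuousOn_snd))
  rw [cov_aux S hSm (fun z => c * ((1 - z.2) * X z.1 + z.2 * z.1))
    (fun z => (1 - z.2) * Y z.1 + z.2 * (1 - z.1))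
    (fun z => c * ((1 - z.2) * X' z.1 + z.2)) (fun z => c * (z.1 - X z.1))
    (fun z => (1 - z.2) * Y' z.1 - z.2) (fun z => 1 - z.1 - Y z.1) _ _ hinj]
  rotate_left
  · intro z hz
    have h1 := (hX z.1 hz.1).comp_hasFDerivAt z (hasFDerivAt_fst (𝕜 := ℝ) (p := z))
    have h := ((((hasFDerivAt_snd (𝕜 := ℝ) (p := z)).const_sub 1).mul h1).add
      ((hasFDerivAt_snd (𝕜 := ℝ) (p := z)).mul (hasFDerivAt_fst (𝕜 := ℝ) (p := z)))).const_mul c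
    exact h.congr_fderiv (by ext <;> simp <;> ring)
  · intro z hz
    have h1 := (hY z.1 hz.1).comp_hasFDerivAt z (hasFDerivAt_fst (𝕜 := ℝ) (p := z))
    have h := ((((hasFDerivAt_snd (𝕜 := ℝ) (p := z)).const_sub 1).mul h1).add
      ((hasFDerivAt_snd (𝕜 := ℝ) (p := z)).mul ((hasFDerivAt_fst (𝕜 := ℝ) (p := z)).const_sub 1)))
    exact h.congr_fderiv (by ext <;> simp <;> ring)
  have e1 : ∫ z in S, |c * ((1 - z.2) * X' z.1 + z.2) * (1 - z.1 - Y z.1)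
        - c * (z.1 - X z.1) * ((1 - z.2) * Y' z.1 - z.2)| *
        u (c * ((1 - z.2) * X z.1 + z.2 * z.1), (1 - z.2) * Y z.1 + z.2 * (1 - z.1))
      = ∫ z in S, c * (A z.1 + B z.1 * z.2) *
        u (c * ((1 - z.2) * X z.1 + z.2 * z.1), (1 - z.2) * Y z.1 + z.2 * (1 - z.1)) := by
    refine setIntegral_congr_fun hSm ?_
    rintro ⟨s, r⟩ ⟨hs, hr⟩
    simp only at hs hr ⊢
    have := hJ s hs r hr
    have h2 : c * ((1 - r) * X' s + r) * (1 - s - Y s)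
        - c * (s - X s) * ((1 - r) * Y' s - r) = c * (A s + B s * r) := by
      rw [← this]; ring
    have := hA s hs
    have := hB s hs
    have := hr.1.le
    rw [h2, abs_of_nonneg (by positivity)]
  rw [e1]
  have i1 : IntegrableOn (fun z : ℝ × ℝ => c * (A z.1 + B z.1 * z.2) *
        u (c * ((1 - z.2) * X z.1 + z.2 * z.1), (1 - z.2) * Y z.1 + z.2 * (1 - z.1))) S := by
    refine (ContinuousOn.integrableOn_compact hK ?_).mono_set hSS'
    refine lJ.mul (hu.comp_continuousOn (ContinuousOn.prodMk ?_ ?_))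
    · exact continuousOn_const.mul (((continuousOn_const.sub continuousOn_snd).mul lX).add
        (continuousOn_snd.mul continuousOn_fst))
    · exact ((continuousOn_const.sub continuousOn_snd).mul lY).add
        (continuousOn_snd.mul (continuousOn_const.sub continuousOn_fst))
  have i2 : IntegrableOn (fun z : ℝ × ℝ => c * (A z.1 + B z.1 * z.2) *
        (u (c * z.1, 1 - z.1) - (1 - z.2) * (c * (z.1 - X z.1) + (1 - z.1 - Y z.1)))) S := by
    refine (ContinuousOn.integrableOn_compact hK ?_).mono_set hSS'
    refine lJ.mul (ContinuousOn.sub ?_ ?_)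
    · exact Continuous.continuousOn (by fun_prop)
    · exact (continuousOn_const.sub continuousOn_snd).mul
        ((continuousOn_const.mul (continuousOn_fst.sub lX)).add
          ((continuousOn_const.sub continuousOn_fst).sub lY))
  have e2 : ∫ z in S, c * (A z.1 + B z.1 * z.2) *
        (u (c * z.1, 1 - z.1) - (1 - z.2) * (c * (z.1 - X z.1) + (1 - z.1 - Y z.1)))
        ≤ ∫ z in S, c * (A z.1 + B z.1 * z.2) *
        u (c * ((1 - z.2) * X z.1 + z.2 * z.1), (1 - z.2) * Y z.1 + z.2 * (1 - z.1)) := by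
    refine setIntegral_mono_on i2 i1 hSm ?_
    rintro ⟨s, r⟩ ⟨hs, hr⟩
    simp only at hs hr ⊢
    have h1 := hA s hs
    have h2 := hB s hs
    have h3 := hr.1.le
    have h4 := hXs s hs
    have h5 := hYs s hs
    have h6 : 0 ≤ 1 - r := by linarith [hr.2]
    have := hLip (c * ((1 - r) * X s + r * s), (1 - r) * Y s + r * (1 - s)) (c * s, 1 - s)
      (by simp only; exact mul_le_mul_of_nonneg_left (by nlinarith) hc.le) (by simp only; nlinarith)
    refine mul_le_mul_of_nonneg_left ?_ (by positivity)
    simp only at this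
    linarith
  refine le_trans (le_of_eq ?_) e2
  rw [Measure.volume_eq_prod] at i2 ⊢
  rw [setIntegral_prod _ i2]
  have e3 : ∀ s ∈ Set.Ioo a b, ∫ r in Set.Ioo (0:ℝ) 1, c * (A s + B s * r) *
        (u (c * s, 1 - s) - (1 - r) * (c * (s - X s) + (1 - s - Y s)))
        = c / 3 * u (c * s, 1 - s) - c * N s := by
    intro s hs
    rw [← integral_Ioc_eq_integral_Ioo, ← intervalIntegral.integral_of_le zero_le_one]
    set M := c * (s - X s) + (1 - s - Y s) with hM
    set E := u (c * s, 1 - s)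
    have : ∀ r : ℝ, HasDerivAt (fun r : ℝ => c * ((A s * r + B s * r ^ 2 / 2) * E
        - M * (A s * (r - r ^ 2 / 2) + B s * (r ^ 2 / 2 - r ^ 3 / 3))))
        (c * (A s + B s * r) * (E - (1 - r) * M)) r := by
      intro r
      have h1 := hasDerivAt_id r
      have h2 := (h1.pow 2)
      have h3 := (h1.pow 3)
      have := ((((h1.const_mul (A s)).add ((h2.const_mul (B s)).div_const 2)).mul_const E).sub
        ((((h1.sub (h2.div_const 2)).const_mul (A s)).add
          (((h2.div_const 2).sub (h3.div_const 3)).const_mul (B s))).const_mul M)).const_mul c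
      exact this.congr_deriv (by simp; ring)
    rw [intervalIntegral.integral_eq_sub_of_hasDerivAt (fun r _ => this r)
      (Continuous.intervalIntegrable (by fun_prop) _ _)]
    rw [← hN s hs, ← hM]
    have := hAB s hs
    linear_combination (c * E) * this
  rw [setIntegral_congr_fun measurableSet_Ioo e3]
  rw [← integral_Ioc_eq_integral_Ioo, ← intervalIntegral.integral_of_le hab,
    intervalIntegral.integral_sub, intervalIntegral.integral_const_mul,
    intervalIntegral.integral_const_mul]
  · exact Continuous.intervalIntegrable (by fun_prop) _ _
  · exact Continuous.intervalIntegrable (by fun_prop) _ _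

lemma alg_key2 (c t d r : ℝ) (hq : 1 + 3 * (c - 1) * d ≠ 0) :
    3 * (1 - (((1 - r) * (t + d / (1 + 3 * (c - 1) * d)) + r * (t + d))
        + ((1 - r) * ((2 / 3 - t) - c * (d / (1 + 3 * (c - 1) * d))) + r * (1 - (t + d)))))
        = (1 - r) * (2 - 1 / (1 + 3 * (c - 1) * d)) := by
  have hi := mul_inv_cancel₀ hq
  linear_combination (1 - r) * hi

lemma alg_J (c t d r : ℝ) (hq : 1 + 3 * (c - 1) * d ≠ 0) :
    ((1 - r) * (1 / (1 + 3 * (c - 1) * d) ^ 2) + r) *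
      (1 - (t + d) - ((2 / 3 - t) - c * (d / (1 + 3 * (c - 1) * d))))
    - ((t + d) - (t + d / (1 + 3 * (c - 1) * d))) *
      ((1 - r) * (- (c * (1 / (1 + 3 * (c - 1) * d) ^ 2))) - r)
    = 1 / 3 / (1 + 3 * (c - 1) * d) + 2 * (c - 1) * d / (1 + 3 * (c - 1) * d) * r := by
  field_simp
  ring

lemma alg_N (c t d : ℝ) (hq : 1 + 3 * (c - 1) * d ≠ 0) :
    (c * ((t + d) - (t + d / (1 + 3 * (c - 1) * d))) +
      (1 - (t + d) - ((2 / 3 - t) - c * (d / (1 + 3 * (c - 1) * d))))) *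
      (1 / 3 / (1 + 3 * (c - 1) * d) / 2 + 2 * (c - 1) * d / (1 + 3 * (c - 1) * d) / 6)
    = 1 / 9 * (1 / 2 + (c - 1) * d) := by
  have hi := mul_inv_cancel₀ hq
  linear_combination (1 / 3 * (1 / 6 + (c - 1) * d / 3)) * hi

lemma claimB (c : ℝ) (hc : 4 / 3 < c) (u : ℝ × ℝ → ℝ) (hu : Continuous u)
    (hpos : ∀ v ∈ Tri c, 0 ≤ u v)
    (hLip : ∀ v w : ℝ × ℝ, v.1 ≤ w.1 → v.2 ≤ w.2 → u w ≤ u v + (w.1 - v.1) + (w.2 - v.2))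
    (h : ℝ) (hh0 : 0 < h) (hh : (c - 1) * h ^ 2 = c / 9) :
    c * (∫ s in (0:ℝ)..1, u (c * s, 1 - s)) - 3 * ∫ v in Tri c, u v
      ≤ c * (1 / 6 + (c - 1) * (h + 1 / 3) ^ 2 / 6) := by
  have hc0 : 0 < c := by linarith
  have hc1 : 0 < c - 1 := by linarith
  have hh1 : h < 2 / 3 := by
    by_contra hcon
    push Not at hcon
    have : (c - 1) * (2/3)^2 ≤ (c - 1) * h ^ 2 :=
      mul_le_mul_of_nonneg_left (by nlinarith) hc1.le
    nlinarith
  obtain ⟨t, ht⟩ : ∃ t, t = 2 / 3 - h := ⟨_, rfl⟩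
  have hht : 2 / 3 - t = h := by linarith
  have ht0 : 0 < t := by linarith
  have ht1 : t < 1 := by linarith
  have q0 : ∀ s, t ≤ s → 0 < 1 + 3 * (c - 1) * (s - t) := by
    intro s hs
    have : 0 ≤ 3 * (c - 1) * (s - t) := mul_nonneg (by linarith) (by linarith)
    linarith
  -- left part
  have hL := fan c hc0 u hu hLip 0 t ht0.le (fun s => s) (fun s => 2 / 3 - s) (fun _ => 1)
    (fun _ => -1) (fun _ => 1 / 3) (fun _ => 0) (fun _ => 1 / 18)
    (fun s _ => hasDerivAt_id s) (fun s _ => by simpa using (hasDerivAt_id s).const_sub (2/3))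
    (by fun_prop) (by fun_prop) (by fun_prop) (by fun_prop) (fun s _ => le_rfl)
    (fun s _ => by linarith) (fun s _ => by norm_num) (fun s _ => by norm_num)
    (fun s _ => by norm_num) (fun s _ r _ => by ring) (fun s _ => by ring) (by fun_prop)
    (by
      rintro ⟨s, r⟩ _ ⟨s', r'⟩ _ hE
      simp only [Prod.mk.injEq] at hE ⊢
      obtain ⟨h1, h2⟩ := hE
      have h3 := mul_left_cancel₀ hc0.ne' h1
      have h4 : s = s' := by linarith
      subst h4
      exact ⟨rfl, by linarith⟩)
  -- right part
  have dq : ∀ s, HasDerivAt (fun s => 1 + 3 * (c - 1) * (s - t)) (3 * (c - 1)) s := by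
    intro s
    have := (((hasDerivAt_id s).sub_const t).const_mul (3 * (c - 1))).const_add 1
    exact this.congr_deriv (by simp)
  have dX : ∀ s, t < s → HasDerivAt (fun s => (s - t) / (1 + 3 * (c - 1) * (s - t)))
      (1 / (1 + 3 * (c - 1) * (s - t)) ^ 2) s := by
    intro s hs
    have := ((hasDerivAt_id s).sub_const t).div (dq s) (q0 s hs.le).ne'
    exact this.congr_deriv (by congr 1; simp; ring)
  have hcq : ContinuousOn (fun s => 1 + 3 * (c - 1) * (s - t)) (Set.Icc t 1) := by fun_prop
  have hcX : ContinuousOn (fun s => (s - t) / (1 + 3 * (c - 1) * (s - t))) (Set.Icc t 1) :=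
    ContinuousOn.div (by fun_prop) hcq (fun s hs => (q0 s hs.1).ne')
  have hXle : ∀ s ∈ Set.Ioo t 1, t + (s - t) / (1 + 3 * (c - 1) * (s - t)) ≤ s := by
    intro s hs
    have : (s - t) / (1 + 3 * (c - 1) * (s - t)) ≤ s - t := by
      apply div_le_self (by linarith [hs.1])
      have : 0 ≤ 3 * (c - 1) * (s - t) := mul_nonneg (by linarith) (by linarith [hs.1])
      linarith
    linarith
  have hXge : ∀ s ∈ Set.Ioo t 1, t < t + (s - t) / (1 + 3 * (c - 1) * (s - t)) := by
    intro s hs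
    have := q0 s hs.1.le
    have : 0 < (s - t) / (1 + 3 * (c - 1) * (s - t)) := div_pos (by linarith [hs.1]) this
    linarith
  have hYle : ∀ s ∈ Set.Ioo t 1, h - c * ((s - t) / (1 + 3 * (c - 1) * (s - t))) ≤ 1 - s := by
    intro s hs
    have hq := q0 s hs.1.le
    obtain ⟨d, hd⟩ : ∃ d, d = s - t := ⟨_, rfl⟩
    have hd0 : 0 < d := by linarith [hs.1]
    have hd1 : d < h + 1 / 3 := by linarith [hs.2]
    rw [← hd] at hq ⊢
    have : d - 1 / 3 ≤ c * (d / (1 + 3 * (c - 1) * d)) := by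
      rw [← mul_div_assoc, le_div_iff₀ hq]
      have h3 : (c - 1) * d * (d - 2/3) ≤ 1 / 9 := by
        rcases le_total d (2/3) with hd2 | hd2
        · have : (c - 1) * d * (d - 2/3) ≤ 0 :=
            mul_nonpos_of_nonneg_of_nonpos (by positivity) (by linarith)
          linarith
        · have : d * (d - 2/3) ≤ (h + 1/3) * (h - 1/3) :=
            mul_le_mul hd1.le (by linarith) (by linarith) (by linarith)
          have := mul_le_mul_of_nonneg_left this hc1.le
          linarith
      nlinarith
    linarith
  have hYge : ∀ s ∈ Set.Ioo t 1, 0 ≤ h - c * ((s - t) / (1 + 3 * (c - 1) * (s - t))) := by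
    intro s hs
    have hq := q0 s hs.1.le
    obtain ⟨d, hd⟩ : ∃ d, d = s - t := ⟨_, rfl⟩
    have hd0 : 0 < d := by linarith [hs.1]
    have hd1 : d < h + 1 / 3 := by linarith [hs.2]
    rw [← hd] at hq ⊢
    have : c * (d / (1 + 3 * (c - 1) * d)) ≤ h := by
      rw [← mul_div_assoc, div_le_iff₀ hq]
      have e : (h + 1 / 3) * (c - 3 * (c - 1) * h) = h := by linear_combination (-3) * hh
      have e1 : 0 < c - 3 * (c - 1) * h := by
        by_contra hcon
        push Not at hcon
        have : (h + 1 / 3) * (c - 3 * (c - 1) * h) ≤ 0 :=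
          mul_nonpos_of_nonneg_of_nonpos (by linarith) hcon
        linarith
      have : d * (c - 3 * (c - 1) * h) ≤ (h + 1 / 3) * (c - 3 * (c - 1) * h) :=
        mul_le_mul_of_nonneg_right hd1.le e1.le
      linarith
    linarith
  have hinj : Set.InjOn (fun z : ℝ × ℝ =>
      (c * ((1 - z.2) * (t + (z.1 - t) / (1 + 3 * (c - 1) * (z.1 - t))) + z.2 * z.1),
      (1 - z.2) * (h - c * ((z.1 - t) / (1 + 3 * (c - 1) * (z.1 - t)))) + z.2 * (1 - z.1)))
      (Set.Ioo t 1 ×ˢ Set.Ioo (0:ℝ) 1) := by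
    have key : ∀ s r, t < s → 3 * ((c * ((1 - r) * (t + (s - t) / (1 + 3 * (c - 1) * (s - t))) + r * s)
        + ((1 - r) * (h - c * ((s - t) / (1 + 3 * (c - 1) * (s - t)))) + r * (1 - s))) - c * t - h)
        = r * (1 + 3 * (c - 1) * (s - t)) := by
      intro s r hs
      rw [ht]; ring
    have key2 : ∀ s r, t < s → 3 * (1 - (((1 - r) * (t + (s - t) / (1 + 3 * (c - 1) * (s - t))) + r * s)
        + ((1 - r) * (h - c * ((s - t) / (1 + 3 * (c - 1) * (s - t)))) + r * (1 - s))))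
        = (1 - r) * (2 - 1 / (1 + 3 * (c - 1) * (s - t))) := by
      intro s r hs
      have := alg_key2 c t (s - t) r (q0 s hs.le).ne'
      rwa [hht, add_sub_cancel] at this
    have mono : ∀ s r s' r', t < s → s < s' → r ∈ Set.Ioo (0:ℝ) 1 → r' ∈ Set.Ioo (0:ℝ) 1 →
        r * (1 + 3 * (c - 1) * (s - t)) = r' * (1 + 3 * (c - 1) * (s' - t)) →
        (1 - r) * (2 - 1 / (1 + 3 * (c - 1) * (s - t)))
          < (1 - r') * (2 - 1 / (1 + 3 * (c - 1) * (s' - t))) := by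
      intro s r s' r' hs hss hr hr' he
      have hqq : 1 + 3 * (c - 1) * (s - t) < 1 + 3 * (c - 1) * (s' - t) := by nlinarith
      have hq1 : 1 < 1 + 3 * (c - 1) * (s - t) := by
        have : 0 < 3 * (c - 1) * (s - t) := mul_pos (by linarith) (by linarith)
        linarith
      generalize 1 + 3 * (c - 1) * (s - t) = q at *
      generalize 1 + 3 * (c - 1) * (s' - t) = q' at *
      have hrr : r' < r := by
        by_contra hcon
        push Not at hcon
        have : r * q < r' * q' := mul_lt_mul' hcon hqq (by linarith) hr'.1
        linarith
      have h1 : 1 / q' < 1 / q := one_div_lt_one_div_of_lt (by linarith) hqq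
      have h2 : 1 / q < 1 := by rw [div_lt_one (by linarith)]; exact hq1
      exact mul_lt_mul'' (by linarith) (by linarith) (by linarith [hr.2]) (by linarith)
    rintro ⟨s, r⟩ ⟨⟨hs, _⟩, hr⟩ ⟨s', r'⟩ ⟨⟨hs', _⟩, hr'⟩ hE
    simp only [Prod.mk.injEq] at hE hs hr hs' hr' ⊢
    obtain ⟨h1, h2⟩ := hE
    have h1' := mul_left_cancel₀ hc0.ne' h1
    have k1 := key s r hs
    rw [h1, h2, key s' r' hs'] at k1
    have k2 := key2 s r hs
    rw [h1', h2, key2 s' r' hs'] at k2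
    have hss : s = s' := by
      rcases lt_trichotomy s s' with hl | hl | hl
      · have := mono s r s' r' hs hl hr hr' k1.symm
        linarith
      · exact hl
      · have := mono s' r' s r hs' hl hr' hr k1
        linarith
    subst hss
    exact ⟨rfl, (mul_right_cancel₀ (q0 s hs.le).ne' k1).symm⟩
  have hR := fan c hc0 u hu hLip t 1 ht1.le
    (fun s => t + (s - t) / (1 + 3 * (c - 1) * (s - t)))
    (fun s => h - c * ((s - t) / (1 + 3 * (c - 1) * (s - t))))
    (fun s => 1 / (1 + 3 * (c - 1) * (s - t)) ^ 2)
    (fun s => - (c * (1 / (1 + 3 * (c - 1) * (s - t)) ^ 2)))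
    (fun s => 1 / 3 / (1 + 3 * (c - 1) * (s - t)))
    (fun s => 2 * (c - 1) * (s - t) / (1 + 3 * (c - 1) * (s - t)))
    (fun s => 1 / 9 * (1 / 2 + (c - 1) * (s - t)))
    (fun s hs => (dX s hs.1).const_add t)
    (fun s hs => ((dX s hs.1).const_mul c).const_sub h)
    (continuousOn_const.add hcX) (continuousOn_const.sub (continuousOn_const.mul hcX))
    (ContinuousOn.div (by fun_prop) hcq (fun s hs => (q0 s hs.1).ne'))
    (ContinuousOn.div (by fun_prop) hcq (fun s hs => (q0 s hs.1).ne'))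
    hXle hYle
    (fun s hs => by have := q0 s hs.1.le; positivity)
    (fun s hs => by
      have := q0 s hs.1.le
      have : 0 < s - t := by linarith [hs.1]
      positivity)
    (fun s hs => by
      have := (q0 s hs.1.le).ne'
      field_simp)
    (fun s hs r hr => by
      have := alg_J c t (s - t) r (q0 s hs.1.le).ne'
      rwa [hht, add_sub_cancel] at this)
    (fun s hs => by
      have := alg_N c t (s - t) (q0 s hs.1.le).ne'
      rwa [hht, add_sub_cancel] at this)
    (by fun_prop) hinj
  have hNL : ∫ s in (0:ℝ)..t, (1 / 18 : ℝ) = t / 18 := by simp; ring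
  have hNR : ∫ s in t..1, 1 / 9 * (1 / 2 + (c - 1) * (s - t))
      = (1 - t) / 18 + (c - 1) * (1 - t) ^ 2 / 18 := by
    have : ∀ s : ℝ, HasDerivAt (fun s : ℝ => (s - t) / 18 + (c - 1) * (s - t) ^ 2 / 18)
        (1 / 9 * (1 / 2 + (c - 1) * (s - t))) s := by
      intro s
      have h1 := (hasDerivAt_id s).sub_const t
      have := (h1.div_const 18).add (((h1.pow 2).const_mul (c - 1)).div_const 18)
      exact this.congr_deriv (by simp; ring)
    rw [intervalIntegral.integral_eq_sub_of_hasDerivAt (fun r _ => this r)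
      (Continuous.intervalIntegrable (by fun_prop) _ _)]
    ring
  rw [hNL] at hL
  rw [hNR] at hR
  set PL := (fun z : ℝ × ℝ => (c * ((1 - z.2) * z.1 + z.2 * z.1),
      (1 - z.2) * (2 / 3 - z.1) + z.2 * (1 - z.1))) '' (Set.Ioo 0 t ×ˢ Set.Ioo (0:ℝ) 1) with hPL
  set PR := (fun z : ℝ × ℝ =>
      (c * ((1 - z.2) * (t + (z.1 - t) / (1 + 3 * (c - 1) * (z.1 - t))) + z.2 * z.1),
      (1 - z.2) * (h - c * ((z.1 - t) / (1 + 3 * (c - 1) * (z.1 - t)))) + z.2 * (1 - z.1)))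
      '' (Set.Ioo t 1 ×ˢ Set.Ioo (0:ℝ) 1) with hPR
  have sL : PL ⊆ Tri c ∩ {v | v.1 < c * t} := by
    rintro _ ⟨⟨s, r⟩, ⟨hs, hr⟩, rfl⟩
    simp only at hs hr
    have h0 := hs.1
    have h1 := hs.2
    have h2 := hr.1
    have h3 := hr.2
    refine ⟨⟨?_, ?_, ?_⟩, ?_⟩
    · simp only
      have : (1 - r) * s + r * s = s := by ring
      rw [this]; positivity
    · simp only; nlinarith
    · simp only
      rw [mul_div_cancel_left₀ _ hc0.ne']; nlinarith
    · simp only [Set.mem_setOf_eq]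
      exact mul_lt_mul_of_pos_left (by linarith) hc0
  have sR : PR ⊆ Tri c ∩ {v | c * t < v.1} := by
    rintro _ ⟨⟨s, r⟩, ⟨hs, hr⟩, rfl⟩
    simp only at hs hr
    have a1 := hXle s hs
    have a2 := hXge s hs
    have a3 := hYle s hs
    have a4 := hYge s hs
    have h0 := hs.1
    have h1 := hs.2
    have h2 := hr.1
    have h3 : 0 < 1 - r := by linarith [hr.2]
    simp only [Set.mem_inter_iff]
    generalize (s - t) / (1 + 3 * (c - 1) * (s - t)) = ξ at a1 a2 a3 a4 ⊢
    have b1 : t < (1 - r) * (t + ξ) + r * s := by nlinarith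
    refine ⟨⟨?_, ?_, ?_⟩, ?_⟩
    · simp only
      exact mul_nonneg hc0.le (by linarith)
    · simp only
      exact add_nonneg (mul_nonneg h3.le a4) (mul_nonneg h2.le (by linarith))
    · simp only
      rw [mul_div_cancel_left₀ _ hc0.ne']; nlinarith
    · exact mul_lt_mul_of_pos_left b1 hc0
  have hui := tri_integrable c hc0 u hu
  have mL : MeasurableSet {v : ℝ × ℝ | v.1 < c * t} := measurableSet_lt measurable_fst measurable_const
  have mR : MeasurableSet {v : ℝ × ℝ | c * t < v.1} := measurableSet_lt measurable_const measurable_fst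
  have nn : 0 ≤ᵐ[volume.restrict (Tri c)] u :=
    (ae_restrict_iff' (tri_meas c)).2 (Filter.Eventually.of_forall hpos)
  have pos1 : ∀ W : Set (ℝ × ℝ), MeasurableSet W → ∀ P ⊆ Tri c ∩ W, 
      ∫ v in P, u v ≤ ∫ v in Tri c ∩ W, u v := by
    intro W hW P hP
    refine setIntegral_mono_set (hui.mono_set Set.inter_subset_left) ?_ (HasSubset.Subset.eventuallyLE hP)
    exact (ae_restrict_iff' ((tri_meas c).inter hW)).2
      (Filter.Eventually.of_forall fun v hv => hpos v hv.1)
  have h1 := pos1 _ mL _ sL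
  have h2 := pos1 _ mR _ sR
  have h3 : (∫ v in Tri c ∩ {v | v.1 < c * t}, u v) + ∫ v in Tri c ∩ {v | c * t < v.1}, u v
      ≤ ∫ v in Tri c, u v := by
    rw [← setIntegral_union]
    · refine setIntegral_mono_set hui nn (HasSubset.Subset.eventuallyLE ?_)
      exact Set.union_subset Set.inter_subset_left Set.inter_subset_left
    · rw [Set.disjoint_left]
      rintro v ⟨_, ha⟩ ⟨_, hb⟩
      exact lt_asymm (show v.1 < c * t from ha) (show c * t < v.1 from hb)
    · exact (tri_meas c).inter mR
    · exact hui.mono_set Set.inter_subset_left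
    · exact hui.mono_set Set.inter_subset_left
  have hsplit : (∫ s in (0:ℝ)..t, u (c * s, 1 - s)) + ∫ s in t..1, u (c * s, 1 - s)
      = ∫ s in (0:ℝ)..1, u (c * s, 1 - s) :=
    intervalIntegral.integral_add_adjacent_intervals
      (Continuous.intervalIntegrable (by fun_prop) _ _)
      (Continuous.intervalIntegrable (by fun_prop) _ _)
  rw [← hsplit]
  have e : h + 1 / 3 = 1 - t := by linarith
  rw [e]
  linarith

/-- for `c > 4/3`, every IC and IR direct mechanism on the
triangle `Tri c` with the uniform distribution has revenue at most
`(2/27) * (4 + c + √(c(c-1)))`. -/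
theorem triangle_revenue_le (c : ℝ) (hc : 4 / 3 < c)
    (x : ℝ × ℝ → ℝ × ℝ) (p : ℝ × ℝ → ℝ)
    (hx : ∀ v ∈ Tri c, (x v).1 ∈ Set.Icc (0 : ℝ) 1 ∧ (x v).2 ∈ Set.Icc (0 : ℝ) 1)
    (hIC : ∀ v ∈ Tri c, ∀ v' ∈ Tri c,
      v.1 * (x v').1 + v.2 * (x v').2 - p v' ≤ v.1 * (x v).1 + v.2 * (x v).2 - p v)
    (hIR : ∀ v ∈ Tri c, 0 ≤ v.1 * (x v).1 + v.2 * (x v).2 - p v) :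
    ∫ v, p v ∂(triMeasure c) ≤ (2 / 27) * (4 + c + Real.sqrt (c * (c - 1))) := by
  have hc0 : 0 < c := by linarith
  have hc1 : 0 < c - 1 := by linarith
  have hq : 0 ≤ Real.sqrt (c * (c - 1)) := Real.sqrt_nonneg _
  unfold triMeasure
  rw [integral_smul_measure, ENNReal.toReal_ofReal (by positivity), smul_eq_mul]
  by_cases hp : IntegrableOn p (Tri c)
  · obtain ⟨u, hu, hpos, hLip, hsub⟩ := u_exists c hc0 x p hx hIC hIR
    have hA := claimA c hc0 u p hu hsub hp
    have hsq : Real.sqrt (c * (c - 1)) ^ 2 = c * (c - 1) := Real.sq_sqrt (by positivity)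
    have hqp : 0 < Real.sqrt (c * (c - 1)) := Real.sqrt_pos.2 (by positivity)
    generalize Real.sqrt (c * (c - 1)) = q at *
    have hB := claimB c hc u hu hpos hLip (q / (3 * (c - 1))) (by positivity)
      (by field_simp; linarith)
    have hAB := hA.trans hB
    have e : c * (1 / 6 + (c - 1) * (q / (3 * (c - 1)) + 1 / 3) ^ 2 / 6)
        = c / 2 * ((2 / 27) * (4 + c + q)) := by
      field_simp
      linear_combination (27 : ℝ) * hsq
    rw [e] at hAB
    calc 2 / c * ∫ v in Tri c, p v ≤ 2 / c * (c / 2 * ((2 / 27) * (4 + c + q))) :=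
          mul_le_mul_of_nonneg_left hAB (by positivity)
      _ = _ := by field_simp
  · rw [integral_undef hp, mul_zero]
    positivity
end
end

section
/- Let c > 4/3 and let p3 = (2c)/3 − (1/3)*sqrt(c*(c−1)). The menu M = {((0,0),0), ((1/c,1),2/3), ((1,1),p3)} has revenue exactly (2/27)*(4 + c + sqrt(c*(c−1))) under the uniform distribution μ on the triangle T = {(v1,v2) : v1 ≥ 0, v2 ≥ 0, v1/c + v2 ≤ 1}. Hence, combined with the matching upper bound over all IC and IR mechanisms, this menu is the revenue-optimal mechanism for this distribution. -/
open MeasureTheory Real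

noncomputable section

open Set in
lemma col_int {S : Set (ℝ × ℝ)} (hS : MeasurableSet S) {f : ℝ × ℝ → ℝ}
    (hf : IntegrableOn f S) {α β : ℝ} (hαβ : α ≤ β) (l g : ℝ → ℝ)
    (h1 : ∀ x y, (x, y) ∈ S → x ∈ Icc α β)
    (h2 : ∀ x ∈ Ioo α β, l x ≤ g x)
    (h3 : ∀ x ∈ Ioo α β, ∀ y, y ∈ Ioo (l x) (g x) → (x, y) ∈ S)
    (h4 : ∀ x ∈ Ioo α β, ∀ y, (x, y) ∈ S → y ∈ Icc (l x) (g x)) :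
    ∫ v in S, f v = ∫ x in α..β, ∫ y in (l x)..(g x), f (x, y) := by
  rw [← integral_indicator hS, Measure.volume_eq_prod, integral_prod]
  · rw [intervalIntegral.integral_of_le hαβ, integral_Ioc_eq_integral_Ioo,
      ← integral_Icc_eq_integral_Ioo, ← integral_indicator measurableSet_Icc]
    have hae : ∀ᵐ x : ℝ, x ≠ α ∧ x ≠ β := by
      have e1 : ∀ᵐ x : ℝ, x ≠ α := by simp [ae_iff]
      have e2 : ∀ᵐ x : ℝ, x ≠ β := by simp [ae_iff]
      filter_upwards [e1, e2] with x a b using ⟨a, b⟩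
    apply integral_congr_ae
    filter_upwards [hae] with x hx
    by_cases hxI : x ∈ Icc α β
    · have hxo : x ∈ Ioo α β := ⟨lt_of_le_of_ne hxI.1 (Ne.symm hx.1), lt_of_le_of_ne hxI.2 hx.2⟩
      rw [indicator_of_mem hxI, intervalIntegral.integral_of_le (h2 x hxo),
        integral_Ioc_eq_integral_Ioo]
      have hm : MeasurableSet {y | (x, y) ∈ S} := measurable_prodMk_left hS
      have : (fun y => S.indicator f (x, y)) = {y | (x, y) ∈ S}.indicator (fun y => f (x, y)) := by
        ext y; simp [indicator]
      simp only [this]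
      rw [integral_indicator hm]
      apply setIntegral_congr_set
      have hIoo : Ioo (l x) (g x) =ᵐ[volume] Icc (l x) (g x) := Ioo_ae_eq_Icc
      refine Filter.EventuallyLE.antisymm ?_ ?_
      · exact (LE.le.eventuallyLE (fun y hy => h4 x hxo y hy)).trans hIoo.symm.le
      · exact LE.le.eventuallyLE (fun y hy => h3 x hxo y hy)
    · rw [indicator_of_notMem hxI]
      have : ∀ y, S.indicator f (x, y) = 0 := fun y =>
        indicator_of_notMem (fun h => hxI (h1 x y h)) _
      simp [this]
  · rw [← Measure.volume_eq_prod]; exact (integrable_indicator_iff hS).2 hf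

open Set in
lemma row_int {S : Set (ℝ × ℝ)} (hS : MeasurableSet S) {f : ℝ × ℝ → ℝ}
    (hf : IntegrableOn f S) {α β : ℝ} (hαβ : α ≤ β) (l g : ℝ → ℝ)
    (h1 : ∀ x y, (x, y) ∈ S → y ∈ Icc α β)
    (h2 : ∀ y ∈ Ioo α β, l y ≤ g y)
    (h3 : ∀ y ∈ Ioo α β, ∀ x, x ∈ Ioo (l y) (g y) → (x, y) ∈ S)
    (h4 : ∀ y ∈ Ioo α β, ∀ x, (x, y) ∈ S → x ∈ Icc (l y) (g y)) :
    ∫ v in S, f v = ∫ y in α..β, ∫ x in (l y)..(g y), f (x, y) := by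
  have hmp : MeasurePreserving (Prod.swap : ℝ × ℝ → ℝ × ℝ) volume volume :=
    Measure.measurePreserving_swap
  have hemb : MeasurableEmbedding (Prod.swap : ℝ × ℝ → ℝ × ℝ) :=
    MeasurableEquiv.prodComm.measurableEmbedding
  rw [← hmp.setIntegral_preimage_emb hemb]
  refine col_int (f := fun v => f v.swap) (measurable_swap hS) ?_ hαβ l g ?_ h2 ?_ ?_
  · exact (hmp.integrableOn_comp_preimage hemb).2 hf
  · intro x y h; exact h1 y x h
  · intro x hx y h; exact h3 x hx y h
  · intro x hx y h; exact h4 x hx y h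

lemma quad_int (A B C a b : ℝ) : ∫ x in a..b, (A + B * x + C * x ^ 2) =
    A * (b - a) + B * (b ^ 2 - a ^ 2) / 2 + C * (b ^ 3 - a ^ 3) / 3 := by
  have hd : ∀ x ∈ Set.uIcc a b, HasDerivAt (fun x : ℝ => A * x + B * x ^ 2 / 2 + C * x ^ 3 / 3)
      (A + B * x + C * x ^ 2) x := by
    intro x _
    have h1 := ((hasDerivAt_id x).const_mul A)
    have h2 := (((hasDerivAt_pow 2 x).const_mul B).div_const 2)
    have h3 := (((hasDerivAt_pow 3 x).const_mul C).div_const 3)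
    refine HasDerivAt.congr_deriv (f := fun x : ℝ => A * x + B * x ^ 2 / 2 + C * x ^ 3 / 3)
      ((h1.fun_add h2).fun_add h3) ?_
    norm_num; ring
  rw [intervalIntegral.integral_eq_sub_of_hasDerivAt hd
    ((by fun_prop : Continuous fun x : ℝ => A + B * x + C * x ^ 2).intervalIntegrable _ _)]
  ring

lemma tri_closed (c : ℝ) : IsClosed (Tri c) := by
  unfold Tri
  refine (isClosed_le (f := fun _ : ℝ × ℝ => (0 : ℝ)) (g := fun v => v.1) (by fun_prop)
    (by fun_prop)).inter
    ((isClosed_le (f := fun _ : ℝ × ℝ => (0 : ℝ)) (g := fun v => v.2) (by fun_prop)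
    (by fun_prop)).inter (isClosed_le (f := fun v : ℝ × ℝ => v.1 / c + v.2) (g := fun _ => 1)
    (by fun_prop) (by fun_prop)))

lemma tri_le {c : ℝ} (hc : 0 < c) {v : ℝ × ℝ} (h : v ∈ Tri c) : v.1 ≤ c ∧ v.2 ≤ 1 := by
  obtain ⟨h1, h2, h3⟩ := h
  have : 0 ≤ v.1 / c := by positivity
  refine ⟨?_, by linarith⟩
  have : v.1 / c ≤ 1 := by linarith
  rwa [div_le_one hc] at this

lemma tri_compact {c : ℝ} (hc : 0 < c) : IsCompact (Tri c) := by
  apply (isCompact_Icc (a := ((0 : ℝ), (0 : ℝ))) (b := (c, (1 : ℝ)))).of_isClosed_subset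
    (tri_closed c)
  intro v hv
  have := tri_le hc hv
  exact ⟨⟨hv.1, hv.2.1⟩, this⟩

lemma tri_intg {c : ℝ} (hc : 0 < c) {S : Set (ℝ × ℝ)} (hS : S ⊆ Tri c) {f : ℝ × ℝ → ℝ}
    (hf : Continuous f) : IntegrableOn f S :=
  (hf.continuousOn.integrableOn_compact (tri_compact hc)).mono_set hS


/-- Convex utility on the triangle with gradients in the unit square. -/
structure UProp (c : ℝ) (u : ℝ × ℝ → ℝ) : Prop where
  cont : Continuous u
  nonneg : ∀ v ∈ Tri c, 0 ≤ u v
  sub : ∀ v ∈ Tri c, ∃ g1 g2 : ℝ, 0 ≤ g1 ∧ g1 ≤ 1 ∧ 0 ≤ g2 ∧ g2 ≤ 1 ∧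
    ∀ w ∈ Tri c, u v + g1 * (w.1 - v.1) + g2 * (w.2 - v.2) ≤ u w

lemma UProp.lip {c : ℝ} {u : ℝ × ℝ → ℝ} (hu : UProp c u) {v w : ℝ × ℝ} (hv : v ∈ Tri c)
    (hw : w ∈ Tri c) (h1 : w.1 ≤ v.1) (h2 : w.2 ≤ v.2) :
    u v - (v.1 - w.1) - (v.2 - w.2) ≤ u w := by
  obtain ⟨g1, g2, a, b, d, e, h⟩ := hu.sub v hv
  have := h w hw
  nlinarith

lemma UProp.mono {c : ℝ} {u : ℝ × ℝ → ℝ} (hu : UProp c u) {v w : ℝ × ℝ} (hv : v ∈ Tri c)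
    (hw : w ∈ Tri c) (h1 : w.1 ≤ v.1) (h2 : w.2 ≤ v.2) : u w ≤ u v := by
  obtain ⟨g1, g2, a, b, d, e, h⟩ := hu.sub w hw
  have := h v hv
  nlinarith [mul_nonneg a (sub_nonneg.2 h1), mul_nonneg d (sub_nonneg.2 h2)]

lemma hyp_mem {c x : ℝ} (hc : 0 < c) (h0 : 0 ≤ x) (h1 : x ≤ c) : (x, 1 - x / c) ∈ Tri c := by
  refine ⟨h0, ?_, ?_⟩
  · have : x / c ≤ 1 := (div_le_one hc).2 h1
    (try simp only); linarith
  · simp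

def rV1 (c h : ℝ) : Set (ℝ × ℝ) :=
  {v | 0 ≤ v.1 ∧ v.1 / c ≤ 2 / 3 - h / 3 ∧ 2 / 3 < v.1 / c + v.2 ∧ v.1 / c + v.2 ≤ 1}
def rV2 (c h : ℝ) : Set (ℝ × ℝ) :=
  {v | 2 / 3 - h / 3 < v.1 / c ∧ h / 3 < v.2 ∧ v.1 / c + v.2 ≤ 1}
def rH (c h : ℝ) : Set (ℝ × ℝ) :=
  {v | 0 ≤ v.2 ∧ v.2 ≤ h / 3 ∧ 2 / 3 < v.1 / c + v.2 ∧ v.1 / c + v.2 ≤ 1}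
def rD (c h : ℝ) : Set (ℝ × ℝ) :=
  {v | 0 ≤ v.2 ∧ 2 * c / 3 - (c - 1) * h ≤ v.1 + v.2 ∧ v.1 / c + v.2 ≤ 2 / 3}

lemma mV1 (c h : ℝ) : MeasurableSet (rV1 c h) := by
  unfold rV1; measurability
lemma mV2 (c h : ℝ) : MeasurableSet (rV2 c h) := by
  unfold rV2; measurability
lemma mH (c h : ℝ) : MeasurableSet (rH c h) := by
  unfold rH; measurability
lemma mD (c h : ℝ) : MeasurableSet (rD c h) := by
  unfold rD; measurability

lemma sV1 {c h : ℝ} (h0 : 0 < h) : rV1 c h ⊆ Tri c := by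
  rintro v ⟨a, b, d, e⟩; exact ⟨a, by linarith, e⟩
lemma nonneg_of_div {c x : ℝ} (hc : 0 < c) (h : 0 ≤ x / c) : 0 ≤ x := by
  have := mul_nonneg h hc.le
  rwa [div_mul_cancel₀ _ hc.ne'] at this
lemma sV2 {c h : ℝ} (hc : 0 < c) (h0 : 0 < h) (h1 : h ≤ 2 / 3) : rV2 c h ⊆ Tri c := by
  rintro v ⟨a, b, e⟩
  exact ⟨nonneg_of_div hc (by linarith), by linarith, e⟩
lemma sH {c h : ℝ} (hc : 0 < c) (h1 : h ≤ 2 / 3) : rH c h ⊆ Tri c := by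
  rintro v ⟨a, b, d, e⟩
  exact ⟨nonneg_of_div hc (by linarith), a, e⟩
lemma rD_le {c h : ℝ} (hc : 1 < c) {v : ℝ × ℝ} (hv : v ∈ rD c h) :
    v.2 ≤ h ∧ v.1 ≤ c * (2 / 3 - v.2) := by
  obtain ⟨a, b, d⟩ := hv
  have : v.1 / c ≤ 2 / 3 - v.2 := by linarith
  rw [div_le_iff₀ (by linarith)] at this
  exact ⟨by nlinarith, by linarith⟩
lemma sD {c h : ℝ} (hc : 1 < c) (h0 : 0 < h) (h1 : h ≤ 2 / 3) : rD c h ⊆ Tri c := by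
  intro v hv
  have := rD_le hc hv
  obtain ⟨a, b, d⟩ := hv
  exact ⟨by nlinarith, a, by linarith⟩

lemma V1_bound {c h : ℝ} (hc : 1 < c) (h0 : 0 < h) (h1 : h ≤ 2 / 3) {u : ℝ × ℝ → ℝ}
    (hu : UProp c u) :
    ∫ x in (0 : ℝ)..(c * (2 / 3 - h / 3)), (u (x, 1 - x / c) / 3 - 1 / 18) ≤
      ∫ v in rV1 c h, u v := by
  have hc0 : 0 < c := by linarith
  have hcont := hu.cont
  have hf : Continuous fun v : ℝ × ℝ => u (v.1, 1 - v.1 / c) - (1 - v.1 / c - v.2) := by fun_prop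
  have e : ∫ v in rV1 c h, (u (v.1, 1 - v.1 / c) - (1 - v.1 / c - v.2)) ≤ ∫ v in rV1 c h, u v := by
    refine setIntegral_mono_on (tri_intg hc0 (sV1 h0) hf) (tri_intg hc0 (sV1 h0) hcont)
      (mV1 c h) ?_
    intro v hv
    have hvT := sV1 h0 hv
    have := hu.lip (hyp_mem hc0 hvT.1 (tri_le hc0 hvT).1) hvT le_rfl
      (by have := hvT.2.2; (try simp only); linarith)
    simp only at this; linarith
  refine le_trans (le_of_eq ?_) e
  rw [col_int (mV1 c h) (tri_intg hc0 (sV1 h0) hf) (α := 0) (β := c * (2 / 3 - h / 3))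
    (by nlinarith) (fun x => 2 / 3 - x / c) (fun x => 1 - x / c)]
  · congr 1; ext x
    have : ∀ y, u (x, 1 - x / c) - (1 - x / c - y) =
      (u (x, 1 - x / c) - (1 - x / c)) + 1 * y + 0 * y ^ 2 := fun y => by ring
    simp only [this, quad_int]; ring
  · rintro x y ⟨a, b, d, e⟩
    simp only at a b
    rw [div_le_iff₀ hc0] at b
    exact ⟨a, by linarith⟩
  · intro x _; (try simp only); linarith
  · intro x hx y hy
    have : x / c ≤ 2 / 3 - h / 3 := by rw [div_le_iff₀ hc0]; linarith [hx.2]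
    exact ⟨hx.1.le, this, by have := hy.1; (try simp only at *); linarith,
      by have := hy.2; (try simp only at *); linarith⟩
  · rintro x hx y ⟨a, b, d, e⟩
    simp only at d e
    exact ⟨by (try simp only); linarith, by (try simp only); linarith⟩

lemma V2_bound {c h : ℝ} (hc : 1 < c) (h0 : 0 < h) (h1 : h ≤ 2 / 3) {u : ℝ × ℝ → ℝ}
    (hu : UProp c u) :
    ∫ x in (c * (2 / 3 - h / 3))..(c * (1 - h / 3)), ((1 - x / c - h / 3) * u (x, 1 - x / c)
      - (1 - x / c - h / 3) ^ 2 / 2) ≤ ∫ v in rV2 c h, u v := by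
  have hc0 : 0 < c := by linarith
  have hcont := hu.cont
  have hS := sV2 hc0 h0 h1
  have hf : Continuous fun v : ℝ × ℝ => u (v.1, 1 - v.1 / c) - (1 - v.1 / c - v.2) := by fun_prop
  have e : ∫ v in rV2 c h, (u (v.1, 1 - v.1 / c) - (1 - v.1 / c - v.2)) ≤ ∫ v in rV2 c h, u v := by
    refine setIntegral_mono_on (tri_intg hc0 hS hf) (tri_intg hc0 hS hcont)
      (mV2 c h) ?_
    intro v hv
    have hvT := hS hv
    have := hu.lip (hyp_mem hc0 hvT.1 (tri_le hc0 hvT).1) hvT le_rfl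
      (by have := hvT.2.2; (try simp only); linarith)
    simp only at this; linarith
  refine le_trans (le_of_eq ?_) e
  rw [col_int (mV2 c h) (tri_intg hc0 hS hf) (α := c * (2 / 3 - h / 3)) (β := c * (1 - h / 3))
    (by nlinarith) (fun x => h / 3) (fun x => 1 - x / c)]
  · congr 1; ext x
    have : ∀ y, u (x, 1 - x / c) - (1 - x / c - y) =
      (u (x, 1 - x / c) - (1 - x / c)) + 1 * y + 0 * y ^ 2 := fun y => by ring
    simp only [this, quad_int]; ring
  · rintro x y ⟨a, b, d⟩
    simp only at a b d
    rw [lt_div_iff₀ hc0] at a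
    have : x / c ≤ 1 - h / 3 := by linarith
    rw [div_le_iff₀ hc0] at this
    exact ⟨by linarith, by linarith⟩
  · intro x hx
    have : x / c ≤ 1 - h / 3 := by rw [div_le_iff₀ hc0]; linarith [hx.2]
    (try simp only); linarith
  · intro x hx y hy
    have : 2 / 3 - h / 3 < x / c := by rw [lt_div_iff₀ hc0]; linarith [hx.1]
    exact ⟨this, hy.1, by have := hy.2; (try simp only at *); linarith⟩
  · rintro x hx y ⟨a, b, d⟩
    simp only at b d
    exact ⟨by (try simp only); linarith, by (try simp only); linarith⟩

lemma H_bound {c h : ℝ} (hc : 1 < c) (h0 : 0 < h) (h1 : h ≤ 2 / 3) {u : ℝ × ℝ → ℝ}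
    (hu : UProp c u) :
    ∫ x in (c * (1 - h / 3))..c, (u (x, 1 - x / c) / 3 - c / 18) ≤ ∫ v in rH c h, u v := by
  have hc0 : 0 < c := by linarith
  have hcont := hu.cont
  have hS := sH hc0 h1
  have hf : Continuous fun v : ℝ × ℝ => u (c - c * v.2, v.2) - (c - c * v.2 - v.1) := by fun_prop
  have e : ∫ v in rH c h, (u (c - c * v.2, v.2) - (c - c * v.2 - v.1)) ≤ ∫ v in rH c h, u v := by
    refine setIntegral_mono_on (tri_intg hc0 hS hf) (tri_intg hc0 hS hcont)
      (mH c h) ?_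
    intro v hv
    have hvT := hS hv
    have h3 : v.1 / c ≤ 1 - v.2 := by linarith [hvT.2.2]
    rw [div_le_iff₀ hc0] at h3
    have hm : (c - c * v.2, v.2) ∈ Tri c := by
      refine ⟨by (try simp only); nlinarith [hvT.1], hvT.2.1, le_of_eq ?_⟩
      (try simp only); field_simp; ring
    have := hu.lip hm hvT (by (try simp only); linarith) le_rfl
    simp only at this; linarith
  refine le_trans (le_of_eq ?_) e
  rw [row_int (mH c h) (tri_intg hc0 hS hf) (α := 0) (β := h / 3)
    (by linarith) (fun y => c * (2 / 3 - y)) (fun y => c * (1 - y))]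
  · have := intervalIntegral.integral_comp_sub_mul (a := 0) (b := h / 3)
      (fun x => u (x, 1 - x / c) / 3 - c / 18) hc0.ne' c
    have e1 : c * (1 - h / 3) = c - c * (h / 3) := by ring
    have e2 : c - c * 0 = c := by ring
    rw [e2, smul_eq_mul] at this
    rw [e1]
    have e3 := congrArg (fun z => c * z) this
    (try simp only at e3)
    rw [mul_inv_cancel_left₀ hc0.ne'] at e3
    rw [← e3, ← intervalIntegral.integral_const_mul]
    congr 1; ext y
    have e4 : 1 - (c - c * y) / c = y := by field_simp; ring
    have : ∀ x, u (c - c * y, y) - (c - c * y - x) =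
      (u (c - c * y, y) - (c - c * y)) + 1 * x + 0 * x ^ 2 := fun y => by ring
    simp only [this, quad_int, e4]; ring
  · rintro x y ⟨a, b, d, e⟩
    exact ⟨a, b⟩
  · intro x _; (try simp only); nlinarith
  · intro y hy x hx
    have a1 : 2 / 3 - y < x / c := by rw [lt_div_iff₀ hc0]; linarith [hx.1]
    have a2 : x / c ≤ 1 - y := by rw [div_le_iff₀ hc0]; linarith [hx.2]
    exact ⟨hy.1.le, hy.2.le, by (try simp only); linarith, by (try simp only); linarith⟩
  · rintro y hy x ⟨a, b, d, e⟩
    simp only at d e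
    have a1 : 2 / 3 - y < x / c := by linarith
    have a2 : x / c ≤ 1 - y := by linarith
    rw [lt_div_iff₀ hc0] at a1
    rw [div_le_iff₀ hc0] at a2
    exact ⟨by (try simp only); linarith, by (try simp only); linarith⟩

/-- centroid of the triangle `rD` -/
def G (c h : ℝ) : ℝ × ℝ := (c * (2 / 3 - h) + h * (1 + c) / 3, h / 3)

lemma G_mem {c h : ℝ} (hc : 1 < c) (h0 : 0 < h) (h1 : h ≤ 2 / 3) : G c h ∈ Tri c := by
  have hc0 : 0 < c := by linarith
  refine ⟨?_, ?_, ?_⟩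
  · simp only [G]; nlinarith [mul_nonneg hc0.le (by linarith : 0 ≤ 2 / 3 - h)]
  · simp only [G]; linarith
  · simp only [G]
    have : (c * (2 / 3 - h) + h * (1 + c) / 3) / c ≤ 1 - h / 3 := by
      rw [div_le_iff₀ hc0]; nlinarith
    linarith

lemma D_bound {c h : ℝ} (hc : 1 < c) (h0 : 0 < h) (h1 : h ≤ 2 / 3) (hh : 9 * (c - 1) * h ^ 2 = c)
    {u : ℝ × ℝ → ℝ} (hu : UProp c u) :
    c / 18 * u (G c h) ≤ ∫ v in rD c h, u v := by
  have hc0 : 0 < c := by linarith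
  have hcont := hu.cont
  have hS := sD hc h0 h1
  obtain ⟨g1, g2, -, -, -, -, hg⟩ := hu.sub _ (G_mem hc h0 h1)
  have hf : Continuous fun v : ℝ × ℝ => u (G c h) + g1 * (v.1 - (G c h).1) +
    g2 * (v.2 - (G c h).2) := by fun_prop
  have e : ∫ v in rD c h, (u (G c h) + g1 * (v.1 - (G c h).1) + g2 * (v.2 - (G c h).2)) ≤
      ∫ v in rD c h, u v :=
    setIntegral_mono_on (tri_intg hc0 hS hf) (tri_intg hc0 hS hcont)
      (mD c h) (fun v hv => hg v (hS hv))
  refine le_trans (le_of_eq ?_) e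
  rw [row_int (mD c h) (tri_intg hc0 hS hf) (α := 0) (β := h)
    (by linarith) (fun y => 2 * c / 3 - (c - 1) * h - y) (fun y => c * (2 / 3 - y))]
  · generalize u (G c h) = U
    simp only [G]
    have : ∀ x y, U + g1 * (x - (c * (2 / 3 - h) + h * (1 + c) / 3)) + g2 * (y - h / 3) =
      (U - g1 * (c * (2 / 3 - h) + h * (1 + c) / 3) + g2 * (y - h / 3)) + g1 * x + 0 * x ^ 2 :=
        fun x y => by ring
    simp only [this, quad_int]
    set A := U - g1 * (c * (2 / 3 - h) + h * (1 + c) / 3) - g2 * (h / 3) with hA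
    have : ∀ y, (U - g1 * (c * (2 / 3 - h) + h * (1 + c) / 3) + g2 * (y - h / 3)) *
        (c * (2 / 3 - y) - (2 * c / 3 - (c - 1) * h - y)) +
        g1 * ((c * (2 / 3 - y)) ^ 2 - (2 * c / 3 - (c - 1) * h - y) ^ 2) / 2 +
        0 * ((c * (2 / 3 - y)) ^ 3 - (2 * c / 3 - (c - 1) * h - y) ^ 3) / 3 =
        (A * ((c - 1) * h) + g1 * ((2 * c / 3) ^ 2 - (2 * c / 3 - (c - 1) * h) ^ 2) / 2) +
        (A * (1 - c) + g2 * ((c - 1) * h) + g1 * (- (4 * c ^ 2 / 3) +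
          2 * (2 * c / 3 - (c - 1) * h)) / 2) * y +
        (g2 * (1 - c) + g1 * (c ^ 2 - 1) / 2) * y ^ 2 := fun y => by rw [hA]; ring
    simp only [this, quad_int]
    rw [hA]
    linear_combination (-U / 18) * hh
  · intro x y hv
    exact ⟨hv.1, (rD_le hc hv).1⟩
  · intro y hy; (try simp only); nlinarith [hy.2]
  · intro y hy x hx
    have a2 : x / c ≤ 2 / 3 - y := by rw [div_le_iff₀ hc0]; linarith [hx.2]
    exact ⟨hy.1.le, by have := hx.1; (try simp only at *); linarith, by (try simp only); linarith⟩
  · intro y hy x hv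
    have := rD_le hc hv
    exact ⟨by have := hv.2.1; (try simp only at *); linarith, this.2⟩


lemma dual_bound {c h : ℝ} (hc : 1 < c) (h0 : 0 < h) (h1 : h ≤ 2 / 3)
    (hh : 9 * (c - 1) * h ^ 2 = c) {u : ℝ × ℝ → ℝ} (hu : UProp c u) :
    (∫ x in (0 : ℝ)..c, u (x, 1 - x / c)) - 3 * ∫ v in Tri c, u v ≤
      c / 27 * (4 + c + 3 * (c - 1) * h) := by
  have hc0 : 0 < c := by linarith
  have hcont := hu.cont
  have i1 := V1_bound hc h0 h1 hu
  have i2 := V2_bound hc h0 h1 hu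
  have i3 := H_bound hc h0 h1 hu
  have i4 := D_bound hc h0 h1 hh hu
  have hsum : (∫ v in rV1 c h, u v) + (∫ v in rV2 c h, u v) + (∫ v in rH c h, u v) +
      (∫ v in rD c h, u v) ≤ ∫ v in Tri c, u v := by
    have s1 := sV1 (c := c) h0
    have s2 := sV2 hc0 h0 h1
    have s3 := sH hc0 h1
    have s4 := sD hc h0 h1
    have s12 := Set.union_subset s1 s2
    have s123 := Set.union_subset s12 s3
    have s1234 := Set.union_subset s123 s4
    have d12 : Disjoint (rV1 c h) (rV2 c h) := by
      rw [Set.disjoint_left]; rintro v ⟨a, b, d, e⟩ ⟨a', b', d'⟩; linarith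
    have d3 : Disjoint (rV1 c h ∪ rV2 c h) (rH c h) := by
      rw [Set.disjoint_left]
      rintro v (⟨a, b, d, e⟩ | ⟨a, b, d⟩) ⟨a', b', d', e'⟩
      · linarith
      · linarith
    have d4 : Disjoint (rV1 c h ∪ rV2 c h ∪ rH c h) (rD c h) := by
      rw [Set.disjoint_left]
      rintro v ((⟨a, b, d, e⟩ | ⟨a, b, d⟩) | ⟨a, b, d, e⟩) ⟨a', b', d'⟩
      · linarith
      · linarith
      · linarith
    rw [← setIntegral_union d12 (mV2 c h) (tri_intg hc0 s1 hcont) (tri_intg hc0 s2 hcont),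
      ← setIntegral_union d3 (mH c h) (tri_intg hc0 s12 hcont) (tri_intg hc0 s3 hcont),
      ← setIntegral_union d4 (mD c h) (tri_intg hc0 s123 hcont) (tri_intg hc0 s4 hcont)]
    refine setIntegral_mono_set (tri_intg hc0 le_rfl hcont) ?_
      (LE.le.eventuallyLE s1234)
    exact (ae_restrict_iff' (tri_closed c).measurableSet).2 (ae_of_all _ hu.nonneg)
  have hUc : Continuous fun x : ℝ => u (x, 1 - x / c) := by fun_prop
  have ii : ∀ a b, IntervalIntegrable (fun x : ℝ => u (x, 1 - x / c)) volume a b :=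
    fun a b => hUc.intervalIntegrable a b
  have hB : (∫ x in (0 : ℝ)..c, u (x, 1 - x / c)) =
      (∫ x in (0 : ℝ)..(c * (2 / 3 - h / 3)), u (x, 1 - x / c)) +
      (∫ x in (c * (2 / 3 - h / 3))..(c * (1 - h / 3)), u (x, 1 - x / c)) +
      (∫ x in (c * (1 - h / 3))..c, u (x, 1 - x / c)) := by
    rw [intervalIntegral.integral_add_adjacent_intervals (ii _ _) (ii _ _),
      intervalIntegral.integral_add_adjacent_intervals (ii _ _) (ii _ _)]
  have hsplit : ∀ a b t : ℝ, ∫ x in a..b, (u (x, 1 - x / c) / 3 - t) =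
      (∫ x in a..b, u (x, 1 - x / c)) / 3 - t * (b - a) := by
    intro a b t
    rw [intervalIntegral.integral_sub ((by fun_prop : Continuous
      fun x : ℝ => u (x, 1 - x / c) / 3).intervalIntegrable _ _)
      (continuous_const.intervalIntegrable _ _), intervalIntegral.integral_div]
    simp; ring
  rw [hsplit] at i1 i3
  have hmid : (∫ x in (c * (2 / 3 - h / 3))..(c * (1 - h / 3)), u (x, 1 - x / c)) -
      3 * (∫ x in (c * (2 / 3 - h / 3))..(c * (1 - h / 3)),
        ((1 - x / c - h / 3) * u (x, 1 - x / c) - (1 - x / c - h / 3) ^ 2 / 2)) ≤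
      ∫ x in (c * (2 / 3 - h / 3))..(c * (1 - h / 3)),
        ((1 - 3 * (1 - x / c - h / 3)) * (u (G c h) + (x - (G c h).1) + (1 - x / c - (G c h).2)) +
          3 / 2 * (1 - x / c - h / 3) ^ 2) := by
    rw [← intervalIntegral.integral_const_mul, ← intervalIntegral.integral_sub (ii _ _)
      ((by fun_prop : Continuous fun x : ℝ => 3 * ((1 - x / c - h / 3) * u (x, 1 - x / c) -
        (1 - x / c - h / 3) ^ 2 / 2)).intervalIntegrable _ _)]
    apply intervalIntegral.integral_mono_on (by nlinarith)
    · exact (by fun_prop : Continuous _).intervalIntegrable _ _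
    · exact (by fun_prop : Continuous _).intervalIntegrable _ _
    · intro x hx
      have a1 : 2 / 3 - h / 3 ≤ x / c := by rw [le_div_iff₀ hc0]; linarith [hx.1]
      have a2 : x / c ≤ 1 - h / 3 := by rw [div_le_iff₀ hc0]; linarith [hx.2]
      have a3 : x ≤ c := by nlinarith [hx.2]
      have a4 : 0 ≤ x := nonneg_of_div hc0 (by linarith)
      have := hu.lip (hyp_mem hc0 a4 a3) (G_mem hc h0 h1)
        (by simp only [G]; nlinarith [hx.1]) (by simp only [G]; linarith)
      simp only at this
      have a5 : 0 ≤ 1 - 3 * (1 - x / c - h / 3) := by linarith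
      nlinarith [mul_le_mul_of_nonneg_left this a5]
  have hP : ∫ x in (c * (2 / 3 - h / 3))..(c * (1 - h / 3)),
        ((1 - 3 * (1 - x / c - h / 3)) * (u (G c h) + (x - (G c h).1) + (1 - x / c - (G c h).2)) +
          3 / 2 * (1 - x / c - h / 3) ^ 2) = c / 6 * u (G c h) + c / 27 * (4 + c + 3 * (c - 1) * h)
        - c * (2 / 3 - h / 3) / 6 - c ^ 2 * h / 18 := by
    generalize u (G c h) = U
    simp only [G]
    set T := U - (c * (2 / 3 - h) + h * (1 + c) / 3) + 1 - h / 3 with hT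
    have : ∀ x, (1 - 3 * (1 - x / c - h / 3)) * (U + (x - (c * (2 / 3 - h) + h * (1 + c) / 3)) +
        (1 - x / c - h / 3)) + 3 / 2 * (1 - x / c - h / 3) ^ 2 =
        ((h - 2) * T + 3 / 2 * (1 - h / 3) ^ 2) +
        ((h - 2) * (1 - 1 / c) + 3 / c * T - 3 * (1 - h / 3) / c) * x +
        (3 / c * (1 - 1 / c) + 3 / 2 / c ^ 2) * x ^ 2 := by
      intro x; rw [hT]; field_simp; ring
    simp only [this, quad_int]
    rw [hT]; field_simp; ring
  rw [hB]
  nlinarith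

open scoped Pointwise in
lemma tri_scale {c l : ℝ} (hl : 0 < l) :
    l⁻¹ • {v : ℝ × ℝ | 0 ≤ v.1 ∧ 0 ≤ v.2 ∧ v.1 / c + v.2 ≤ l} = Tri c := by
  ext v
  rw [Set.mem_smul_set_iff_inv_smul_mem₀ (inv_ne_zero hl.ne'), inv_inv]
  simp only [Set.mem_setOf_eq, Tri, Prod.smul_fst, Prod.smul_snd, smul_eq_mul]
  rw [mul_nonneg_iff_of_pos_left hl, mul_nonneg_iff_of_pos_left hl]
  have : l * v.1 / c + l * v.2 = l * (v.1 / c + v.2) := by ring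
  rw [this]
  have : l * (v.1 / c + v.2) ≤ l ↔ v.1 / c + v.2 ≤ 1 := by
    constructor
    · intro h; nlinarith
    · intro h; nlinarith
  rw [this]

open scoped Pointwise in
lemma scale_bound {c l : ℝ} (hc : 0 < c) (hl : 0 < l) (hl1 : l < 1) {u p : ℝ × ℝ → ℝ}
    (hu : UProp c u) (hp : IntegrableOn p (Tri c))
    (hp1 : ∀ v ∈ Tri c, p v ≤ c + 1)
    (hp2 : ∀ v ∈ Tri c, l⁻¹ • v ∈ Tri c → (1 - l) * p v ≤ l * u (l⁻¹ • v) - u v) :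
    ∫ v in Tri c, p v ≤ (∫ x in (0 : ℝ)..c, u (x, 1 - x / c)) -
      (1 + l + l ^ 2) * (∫ v in Tri c, u v) + (c + 1) * (∫ _v in Tri c, (1 : ℝ)) * (1 - l ^ 2) := by
  have hcont := hu.cont
  set S : Set (ℝ × ℝ) := {v : ℝ × ℝ | 0 ≤ v.1 ∧ 0 ≤ v.2 ∧ v.1 / c + v.2 ≤ l} with hSdef
  have hsm : l⁻¹ • S = Tri c := tri_scale hl
  have hST : S ⊆ Tri c := fun v hv => ⟨hv.1, hv.2.1, by linarith [hv.2.2]⟩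
  have hSm : MeasurableSet S := by rw [hSdef]; measurability
  have hTm : MeasurableSet (Tri c) := (tri_closed c).measurableSet
  have hscale : ∀ f : ℝ × ℝ → ℝ, ∫ v in S, f (l⁻¹ • v) = l ^ 2 * ∫ v in Tri c, f v := by
    intro f
    rw [Measure.setIntegral_comp_smul volume f S (inv_ne_zero hl.ne'), hsm]
    have : Module.finrank ℝ (ℝ × ℝ) = 2 := by simp
    rw [this, smul_eq_mul, inv_pow, inv_inv, abs_of_nonneg (by positivity)]
  have hcs : Continuous fun v : ℝ × ℝ => u (l⁻¹ • v) := by fun_prop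
  -- the inner part
  have e1 : (1 - l) * ∫ v in S, p v ≤ l ^ 3 * (∫ v in Tri c, u v) - ∫ v in S, u v := by
    have : ∫ v in S, (1 - l) * p v ≤ ∫ v in S, (l * u (l⁻¹ • v) - u v) := by
      refine setIntegral_mono_on ((hp.mono_set hST).const_mul _) (tri_intg hc hST (by fun_prop))
        hSm ?_
      intro v hv
      refine hp2 v (hST hv) ?_
      rw [← hsm]; exact Set.smul_mem_smul_set hv
    rw [integral_const_mul, integral_sub (tri_intg hc hST (by fun_prop)) (tri_intg hc hST hcont),
      integral_const_mul, hscale] at this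
    linarith
  have e2 : ∫ v in Tri c \ S, p v ≤ (c + 1) * (∫ _v in Tri c, (1 : ℝ)) * (1 - l ^ 2) := by
    have a : ∫ v in Tri c \ S, p v ≤ ∫ v in Tri c \ S, (c + 1) * (1 : ℝ) := by
      refine setIntegral_mono_on (hp.mono_set Set.diff_subset)
        (tri_intg hc Set.diff_subset continuous_const) (hTm.diff hSm) ?_
      intro v hv; rw [mul_one]; exact hp1 v hv.1
    have b := hscale (fun _ => (1 : ℝ))
    (try simp only at b)
    rw [integral_const_mul, setIntegral_sdiff hSm (tri_intg hc le_rfl continuous_const) hST, b] at a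
    linarith
  have e3 : ∫ v in Tri c \ S, u v ≤ (1 - l) * ∫ x in (0 : ℝ)..c, u (x, 1 - x / c) := by
    have hf : Continuous fun v : ℝ × ℝ => u (v.1, 1 - v.1 / c) := by fun_prop
    have a : ∫ v in Tri c \ S, u v ≤ ∫ v in Tri c \ S, u (v.1, 1 - v.1 / c) := by
      refine setIntegral_mono_on (tri_intg hc Set.diff_subset hcont)
        (tri_intg hc Set.diff_subset hf) (hTm.diff hSm) ?_
      intro v hv
      exact hu.mono (hyp_mem hc hv.1.1 (tri_le hc hv.1).1) hv.1 le_rfl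
        (by have := hv.1.2.2; simp only; linarith)
    refine a.trans ?_
    rw [col_int (hTm.diff hSm) (tri_intg hc Set.diff_subset hf) hc.le
      (fun x => max 0 (l - x / c)) (fun x => 1 - x / c), ← intervalIntegral.integral_const_mul]
    · simp only [intervalIntegral.integral_const, smul_eq_mul]
      apply intervalIntegral.integral_mono_on hc.le
      · exact (by fun_prop : Continuous fun x : ℝ =>
          (1 - x / c - max 0 (l - x / c)) * u (x, 1 - x / c)).intervalIntegrable _ _
      · exact (by fun_prop : Continuous fun x : ℝ =>
          (1 - l) * u (x, 1 - x / c)).intervalIntegrable _ _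
      · intro x hx
        apply mul_le_mul_of_nonneg_right _ (hu.nonneg _ (hyp_mem hc hx.1 hx.2))
        have := le_max_right 0 (l - x / c)
        linarith
    · intro x y hv
      exact ⟨hv.1.1, (tri_le hc hv.1).1⟩
    · intro x hx
      have : x / c ≤ 1 := (div_le_one hc).2 hx.2.le
      exact max_le (by linarith) (by linarith)
    · intro x hx y hy
      have h1 := lt_of_le_of_lt (le_max_left 0 (l - x / c)) hy.1
      have h2 := lt_of_le_of_lt (le_max_right 0 (l - x / c)) hy.1
      have h3 := hy.2
      refine ⟨⟨hx.1.le, h1.le, ?_⟩, ?_⟩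
      · simp only at *; linarith
      · intro hS; have := hS.2.2; simp only at *; linarith
    · intro x hx y hv
      refine ⟨max_le hv.1.2.1 ?_, ?_⟩
      · by_contra hlt
        push Not at hlt
        exact hv.2 ⟨hv.1.1, hv.1.2.1, by simp only; linarith⟩
      · have := hv.1.2.2; simp only at *; linarith
  have e4 := setIntegral_sdiff hSm (tri_intg hc le_rfl hcont) hST
  have e5 := setIntegral_sdiff hSm hp hST
  rw [e4] at e3
  rw [e5] at e2
  have e6 : (1 - l) * ∫ v in S, p v ≤ (1 - l) * ((∫ x in (0 : ℝ)..c, u (x, 1 - x / c)) -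
      (1 + l + l ^ 2) * (∫ v in Tri c, u v)) := by nlinarith
  have e7 := le_of_mul_le_mul_left e6 (by linarith)
  linarith

lemma mech_bound {c : ℝ} (hc : 0 < c) (x : ℝ × ℝ → ℝ × ℝ) (p : ℝ × ℝ → ℝ)
    (hx : ∀ v ∈ Tri c, (x v).1 ∈ Set.Icc (0 : ℝ) 1 ∧ (x v).2 ∈ Set.Icc (0 : ℝ) 1)
    (hic : ∀ v ∈ Tri c, ∀ v' ∈ Tri c,
        v.1 * (x v').1 + v.2 * (x v').2 - p v' ≤ v.1 * (x v).1 + v.2 * (x v).2 - p v)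
    (hir : ∀ v ∈ Tri c, 0 ≤ v.1 * (x v).1 + v.2 * (x v).2 - p v)
    (hp : IntegrableOn p (Tri c)) :
    ∃ u, UProp c u ∧ ∫ v in Tri c, p v ≤ (∫ x in (0 : ℝ)..c, u (x, 1 - x / c)) -
      3 * (∫ v in Tri c, u v) := by
  set u0 : ℝ × ℝ → ℝ := fun v => v.1 * (x v).1 + v.2 * (x v).2 - p v with hu0
  have hsub : ∀ v ∈ Tri c, ∀ w ∈ Tri c,
      u0 v + (x v).1 * (w.1 - v.1) + (x v).2 * (w.2 - v.2) ≤ u0 w := by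
    intro v hv w hw
    have := hic w hw v hv
    simp only [hu0]; linarith
  have hone : ∀ v ∈ Tri c, ∀ w ∈ Tri c, u0 v - u0 w ≤ 2 * dist v w := by
    intro v hv w hw
    have h1 := hsub v hv w hw
    obtain ⟨⟨a1, a2⟩, b1, b2⟩ := hx v hv
    have d1 : |v.1 - w.1| ≤ dist v w := by
      rw [← Real.dist_eq, Prod.dist_eq]; exact le_max_left _ _
    have d2 : |v.2 - w.2| ≤ dist v w := by
      rw [← Real.dist_eq, Prod.dist_eq]; exact le_max_right _ _
    have f1 : (x v).1 * (v.1 - w.1) ≤ |v.1 - w.1| := by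
      nlinarith [le_abs_self (v.1 - w.1), abs_nonneg (v.1 - w.1)]
    have f2 : (x v).2 * (v.2 - w.2) ≤ |v.2 - w.2| := by
      nlinarith [le_abs_self (v.2 - w.2), abs_nonneg (v.2 - w.2)]
    linarith
  have hlip : LipschitzOnWith 2 u0 (Tri c) := by
    apply LipschitzOnWith.of_dist_le_mul
    intro v hv w hw
    rw [Real.dist_eq, abs_le]
    have h1 := hone v hv w hw
    have h2 := hone w hw v hv
    rw [dist_comm] at h2
    push_cast
    constructor <;> linarith
  obtain ⟨g, hg⟩ := ContinuousMap.exists_restrict_eq (tri_closed c)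
    ⟨(Tri c).domRestrict u0, hlip.continuousOn.domRestrict⟩
  have hgu : ∀ v ∈ Tri c, g v = u0 v := by
    intro v hv
    have := congrArg (fun f => f ⟨v, hv⟩) hg
    exact this
  have hU : UProp c g := by
    refine ⟨g.continuous, ?_, ?_⟩
    · intro v hv; rw [hgu v hv]; exact hir v hv
    · intro v hv
      obtain ⟨⟨a1, a2⟩, b1, b2⟩ := hx v hv
      refine ⟨_, _, a1, a2, b1, b2, fun w hw => ?_⟩
      rw [hgu v hv, hgu w hw]; exact hsub v hv w hw
  refine ⟨g, hU, ?_⟩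
  set B := ∫ x in (0 : ℝ)..c, g (x, 1 - x / c)
  set I := ∫ v in Tri c, g v
  set V := ∫ _v in Tri c, (1 : ℝ)
  have key : ∀ l ∈ Set.Ioo (0 : ℝ) 1, ∫ v in Tri c, p v ≤
      B - (1 + l + l ^ 2) * I + (c + 1) * V * (1 - l ^ 2) := by
    intro l hl
    apply scale_bound hc hl.1 hl.2 hU hp
    · intro v hv
      obtain ⟨⟨a1, a2⟩, b1, b2⟩ := hx v hv
      have := hir v hv
      have h1 := tri_le hc hv
      have h2 := hv.1
      have h3 := hv.2.1
      nlinarith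
    · intro v hv hw
      rw [hgu _ hw, hgu _ hv]
      have := hsub v hv _ hw
      have h3 : l * (u0 v + (x v).1 * ((l⁻¹ • v).1 - v.1) + (x v).2 * ((l⁻¹ • v).2 - v.2)) ≤
        l * u0 (l⁻¹ • v) := mul_le_mul_of_nonneg_left this hl.1.le
      have h4 : l * (u0 v + (x v).1 * ((l⁻¹ • v).1 - v.1) + (x v).2 * ((l⁻¹ • v).2 - v.2)) =
          l * u0 v + (1 - l) * ((x v).1 * v.1 + (x v).2 * v.2) := by
        simp only [Prod.smul_fst, Prod.smul_snd, smul_eq_mul]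
        have := hl.1.ne'
        field_simp; ring
      have h5 : u0 v = v.1 * (x v).1 + v.2 * (x v).2 - p v := rfl
      have h6 : (1 - l) * p v = (1 - l) * ((x v).1 * v.1 + (x v).2 * v.2) - (1 - l) * u0 v := by
        rw [h5]; ring
      linarith
  have hlim : Filter.Tendsto (fun l : ℝ => B - (1 + l + l ^ 2) * I + (c + 1) * V * (1 - l ^ 2))
      (nhdsWithin 1 (Set.Iio 1)) (nhds (B - 3 * I)) := by
    have : Continuous (fun l : ℝ => B - (1 + l + l ^ 2) * I + (c + 1) * V * (1 - l ^ 2)) := by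
      fun_prop
    have h := this.tendsto 1
    have e : B - (1 + 1 + 1 ^ 2) * I + (c + 1) * V * (1 - 1 ^ 2) = B - 3 * I := by ring
    rw [e] at h
    exact h.mono_left nhdsWithin_le_nhds
  refine ge_of_tendsto hlim ?_
  filter_upwards [Ioo_mem_nhdsLT (show (0 : ℝ) < 1 by norm_num)] with l hl using key l hl


lemma buyerPrice_eq {M : Finset ((ℝ × ℝ) × ℝ)} {v : ℝ × ℝ} (it : (ℝ × ℝ) × ℝ) (hit : it ∈ M)
    (h1 : ∀ it' ∈ M, util v it' ≤ util v it)
    (h2 : ∀ it' ∈ M, util v it ≤ util v it' → it'.2 ≤ it.2) : buyerPrice M v = it.2 := by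
  unfold buyerPrice
  apply IsGreatest.csSup_eq
  refine ⟨⟨it, hit, rfl, h1⟩, ?_⟩
  rintro q ⟨it', hit', rfl, h⟩
  exact h2 it' hit' (h it hit)

def rA1 (c h : ℝ) : Set (ℝ × ℝ) := {v | v ∈ Tri c ∧ 2 / 3 - h ≤ v.1 / c ∧
  2 * c / 3 - (c - 1) * h ≤ v.1 + v.2 ∧ v.1 ≤ 2 * c / 3 - (c - 1) * h}
def rA2 (c h : ℝ) : Set (ℝ × ℝ) := {v | v ∈ Tri c ∧ 2 * c / 3 - (c - 1) * h < v.1}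
def rW (c h : ℝ) : Set (ℝ × ℝ) := {v | v ∈ Tri c ∧ v.1 / c < 2 / 3 - h ∧ 2 / 3 ≤ v.1 / c + v.2}

lemma mA1 (c h : ℝ) : MeasurableSet (rA1 c h) := by
  refine (tri_closed c).measurableSet.inter (s₂ := {v : ℝ × ℝ | 2 / 3 - h ≤ v.1 / c ∧
    2 * c / 3 - (c - 1) * h ≤ v.1 + v.2 ∧ v.1 ≤ 2 * c / 3 - (c - 1) * h}) ?_
  measurability
lemma mA2 (c h : ℝ) : MeasurableSet (rA2 c h) := by
  refine (tri_closed c).measurableSet.inter (s₂ := {v : ℝ × ℝ |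
    2 * c / 3 - (c - 1) * h < v.1}) ?_
  measurability
lemma mW (c h : ℝ) : MeasurableSet (rW c h) := by
  refine (tri_closed c).measurableSet.inter (s₂ := {v : ℝ × ℝ | v.1 / c < 2 / 3 - h ∧
    2 / 3 ≤ v.1 / c + v.2}) ?_
  measurability

lemma one_col (a b α β : ℝ) (l g : ℝ → ℝ) (hlg : ∀ x, g x - l x = α + β * x) :
    ∫ x in a..b, ∫ _y in (l x)..(g x), (1 : ℝ) = α * (b - a) + β * (b ^ 2 - a ^ 2) / 2 := by
  have e := quad_int α β 0 a b
  simp only [intervalIntegral.integral_const, smul_eq_mul, mul_one, hlg]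
  simp only [zero_mul, add_zero] at e
  rw [e]; ring

lemma areaW {c h : ℝ} (hc : 1 < c) (h0 : 0 < h) (h1 : h ≤ 2 / 3) :
    ∫ _v in rW c h, (1 : ℝ) = c * (2 / 3 - h) / 3 := by
  have hc0 : 0 < c := by linarith
  rw [col_int (mW c h) (tri_intg hc0 (fun v hv => hv.1) continuous_const) (α := 0)
    (β := c * (2 / 3 - h)) (by nlinarith) (fun x => 2 / 3 - x / c) (fun x => 1 - x / c),
    one_col _ _ (1 / 3) 0 _ _ (fun x => by ring)]
  · ring
  · rintro x y ⟨a, b, d⟩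
    have := a.1
    (try simp only at *)
    rw [div_lt_iff₀ hc0] at b
    exact ⟨this, by linarith⟩
  · intro x hx; linarith
  · intro x hx y hy
    have a1 : x / c < 2 / 3 - h := by rw [div_lt_iff₀ hc0]; linarith [hx.2]
    have := hy.1
    have := hy.2
    (try simp only at *)
    exact ⟨⟨hx.1.le, by simp only; linarith, by simp only; linarith⟩, a1, by simp only; linarith⟩
  · rintro x hx y ⟨a, b, d⟩
    have := a.2.2
    (try simp only at *)
    exact ⟨by linarith, by linarith⟩

lemma areaA1 {c h : ℝ} (hc : 1 < c) (h0 : 0 < h) (h1 : h ≤ 2 / 3) :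
    ∫ _v in rA1 c h, (1 : ℝ) = (1 - (2 * c / 3 - (c - 1) * h)) * h +
      (1 - 1 / c) * ((2 * c / 3 - (c - 1) * h) ^ 2 - (c * (2 / 3 - h)) ^ 2) / 2 := by
  have hc0 : 0 < c := by linarith
  rw [col_int (mA1 c h) (tri_intg hc0 (fun v hv => hv.1) continuous_const) (α := c * (2 / 3 - h))
    (β := 2 * c / 3 - (c - 1) * h) (by nlinarith) (fun x => 2 * c / 3 - (c - 1) * h - x)
    (fun x => 1 - x / c),
    one_col _ _ (1 - (2 * c / 3 - (c - 1) * h)) (1 - 1 / c) _ _ (fun x => by ring)]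
  · ring
  · rintro x y ⟨a, b, d, e⟩
    (try simp only at *)
    rw [le_div_iff₀ hc0] at b
    exact ⟨by linarith, by linarith⟩
  · intro x hx
    have a1 : 2 / 3 - h < x / c := by rw [lt_div_iff₀ hc0]; linarith [hx.1]
    have e : x = c * (x / c) := by field_simp
    generalize x / c = t at *
    subst e
    nlinarith
  · intro x hx y hy
    have a1 : 2 / 3 - h ≤ x / c := by rw [le_div_iff₀ hc0]; linarith [hx.1]
    have b1 := hy.1
    have b2 := hy.2
    have b3 := hx.2
    have b4 := hx.1
    (try simp only at *)
    exact ⟨⟨by simp only; nlinarith, by simp only; linarith, by simp only; linarith⟩, a1,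
      by simp only; linarith, b3.le⟩
  · rintro x hx y ⟨a, b, d, e⟩
    have := a.2.2
    (try simp only at *)
    exact ⟨by linarith, by linarith⟩

lemma areaA2 {c h : ℝ} (hc : 1 < c) (h0 : 0 < h) (h1 : h ≤ 2 / 3) :
    ∫ _v in rA2 c h, (1 : ℝ) = (c - (2 * c / 3 - (c - 1) * h)) -
      (c ^ 2 - (2 * c / 3 - (c - 1) * h) ^ 2) / (2 * c) := by
  have hc0 : 0 < c := by linarith
  rw [col_int (mA2 c h) (tri_intg hc0 (fun v hv => hv.1) continuous_const)
    (α := 2 * c / 3 - (c - 1) * h) (β := c) (by nlinarith) (fun x => 0)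
    (fun x => 1 - x / c),
    one_col _ _ 1 (- 1 / c) _ _ (fun x => by ring)]
  · field_simp; ring
  · rintro x y ⟨a, b⟩
    exact ⟨le_of_lt b, (tri_le hc0 a).1⟩
  · intro x hx
    have a1 : x / c ≤ 1 := (div_le_one hc0).2 hx.2.le
    linarith
  · intro x hx y hy
    have b1 := hy.1
    have b2 := hy.2
    have b4 := hx.1
    (try simp only at *)
    exact ⟨⟨by simp only; nlinarith, by simp only; linarith, by simp only; linarith⟩, b4⟩
  · rintro x hx y ⟨a, b⟩
    have := a.2.2
    have := a.2.1
    (try simp only at *)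
    exact ⟨by linarith, by linarith⟩

lemma price_eq {c h : ℝ} (hc : 1 < c) (h0 : 0 < h) (h1 : h ≤ 2 / 3) {v : ℝ × ℝ}
    (hv : v ∈ Tri c) :
    buyerPrice {(((0 : ℝ), (0 : ℝ)), (0 : ℝ)), (((1 / c : ℝ), (1 : ℝ)), (2 / 3 : ℝ)),
              (((1 : ℝ), (1 : ℝ)), 2 * c / 3 - (c - 1) * h)} v =
      (rA1 c h).indicator (fun _ => (2 * c / 3 - (c - 1) * h) * 1) v +
      (rA2 c h).indicator (fun _ => (2 * c / 3 - (c - 1) * h) * 1) v +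
      (rW c h).indicator (fun _ => (2 / 3 : ℝ) * 1) v := by
  have hc0 : 0 < c := by linarith
  set P := 2 * c / 3 - (c - 1) * h with hP
  set t := v.1 / c with ht
  have hvt : v.1 = c * t := by rw [ht]; field_simp
  have u2 : util v (((1 / c : ℝ), (1 : ℝ)), (2 / 3 : ℝ)) = t + v.2 - 2 / 3 := by
    simp only [util, ht]; ring
  have u0 : util v (((0 : ℝ), (0 : ℝ)), (0 : ℝ)) = 0 := by simp [util]
  have u3 : util v (((1 : ℝ), (1 : ℝ)), P) = v.1 + v.2 - P := by
    simp only [util]; ring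
  have hdiff : v.1 + v.2 - P - (t + v.2 - 2 / 3) = (c - 1) * (t - (2 / 3 - h)) := by
    rw [hvt, hP]; ring
  have hP2 : 2 / 3 ≤ P := by rw [hP]; nlinarith
  have hv2 := hv.2.1
  by_cases hA : 2 / 3 - h ≤ t ∧ P ≤ v.1 + v.2
  · have hnW : v ∉ rW c h := fun hw => by have := hw.2.1; linarith [hA.1]
    have hd : 0 ≤ (c - 1) * (t - (2 / 3 - h)) :=
      mul_nonneg (by linarith) (by linarith [hA.1])
    rw [buyerPrice_eq (((1 : ℝ), (1 : ℝ)), P) (by simp), Set.indicator_of_notMem hnW]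
    · by_cases hx : v.1 ≤ P
      · have m1 : v ∈ rA1 c h := ⟨hv, hA.1, hA.2, hx⟩
        have m2 : v ∉ rA2 c h := fun hw => by have := hw.2; linarith
        rw [Set.indicator_of_mem m1, Set.indicator_of_notMem m2]; simp
      · push Not at hx
        have m1 : v ∉ rA1 c h := fun hw => by have := hw.2.2.2; linarith
        have m2 : v ∈ rA2 c h := ⟨hv, hx⟩
        rw [Set.indicator_of_notMem m1, Set.indicator_of_mem m2]; simp
    · intro it hit
      simp only [Finset.mem_insert, Finset.mem_singleton] at hit
      rcases hit with rfl | rfl | rfl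
      · rw [u0, u3]; linarith [hA.2]
      · rw [u2, u3]; linarith
      · exact le_rfl
    · intro it hit _
      simp only [Finset.mem_insert, Finset.mem_singleton] at hit
      rcases hit with rfl | rfl | rfl
      · simp only; linarith
      · exact hP2
      · exact le_rfl
  · have m1 : v ∉ rA1 c h := fun hw => hA ⟨hw.2.1, hw.2.2.1⟩
    have m2 : v ∉ rA2 c h := fun hw => hA ⟨by
      have h3 := hw.2
      have : c * (2 / 3 - h) ≤ c * t := by rw [← hvt]; nlinarith
      exact le_of_mul_le_mul_left this hc0, by have := hw.2; linarith⟩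
    rw [Set.indicator_of_notMem m1, Set.indicator_of_notMem m2]
    by_cases hW : t < 2 / 3 - h ∧ 2 / 3 ≤ t + v.2
    · have m3 : v ∈ rW c h := ⟨hv, hW.1, hW.2⟩
      have hd : 0 < (c - 1) * ((2 / 3 - h) - t) :=
        mul_pos (by linarith) (by linarith [hW.1])
      rw [Set.indicator_of_mem m3, buyerPrice_eq (((1 / c : ℝ), (1 : ℝ)), (2 / 3 : ℝ)) (by simp)]
      · simp
      · intro it hit
        simp only [Finset.mem_insert, Finset.mem_singleton] at hit
        rcases hit with rfl | rfl | rfl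
        · rw [u0, u2]; linarith [hW.2]
        · exact le_rfl
        · rw [u2, u3]; linarith
      · intro it hit hle
        simp only [Finset.mem_insert, Finset.mem_singleton] at hit
        rcases hit with rfl | rfl | rfl
        · simp only; norm_num
        · exact le_rfl
        · rw [u2, u3] at hle; linarith
    · have m3 : v ∉ rW c h := fun hw => hW ⟨hw.2.1, hw.2.2⟩
      have hneg : t + v.2 - 2 / 3 < 0 ∧ v.1 + v.2 - P < 0 := by
        by_cases htt : t < 2 / 3 - h
        · have hd : 0 < (c - 1) * ((2 / 3 - h) - t) := mul_pos (by linarith) (by linarith)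
          have : ¬ (2 / 3 ≤ t + v.2) := fun h => hW ⟨htt, h⟩
          push Not at this
          exact ⟨by linarith, by linarith⟩
        · push Not at htt
          have hd : 0 ≤ (c - 1) * (t - (2 / 3 - h)) := mul_nonneg (by linarith) (by linarith)
          have : ¬ (P ≤ v.1 + v.2) := fun h => hA ⟨htt, h⟩
          push Not at this
          exact ⟨by linarith, by linarith⟩
      rw [Set.indicator_of_notMem m3, buyerPrice_eq (((0 : ℝ), (0 : ℝ)), (0 : ℝ)) (by simp)]
      · simp
      · intro it hit
        simp only [Finset.mem_insert, Finset.mem_singleton] at hit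
        rcases hit with rfl | rfl | rfl
        · exact le_rfl
        · rw [u0, u2]; linarith
        · rw [u0, u3]; linarith
      · intro it hit hle
        simp only [Finset.mem_insert, Finset.mem_singleton] at hit
        rcases hit with rfl | rfl | rfl
        · exact le_rfl
        · rw [u0, u2] at hle; linarith
        · rw [u0, u3] at hle; linarith

lemma menu_rev {c h : ℝ} (hc : 1 < c) (h0 : 0 < h) (h1 : h ≤ 2 / 3)
    (hh : 9 * (c - 1) * h ^ 2 = c) :
    2 / c * ∫ v in Tri c, buyerPrice {(((0 : ℝ), (0 : ℝ)), (0 : ℝ)),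
              (((1 / c : ℝ), (1 : ℝ)), (2 / 3 : ℝ)),
              (((1 : ℝ), (1 : ℝ)), 2 * c / 3 - (c - 1) * h)} v =
      2 / 27 * (4 + c + 3 * (c - 1) * h) := by
  have hc0 : 0 < c := by linarith
  have hTm := (tri_closed c).measurableSet
  rw [setIntegral_congr_fun hTm (fun v hv => price_eq hc h0 h1 hv)]
  have hi : ∀ (S : Set (ℝ × ℝ)) (k : ℝ), MeasurableSet S →
      IntegrableOn (S.indicator (fun _ => k * 1)) (Tri c) := fun S k hS =>
    IntegrableOn.indicator (tri_intg hc0 le_rfl continuous_const) hS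
  have hv : ∀ (S : Set (ℝ × ℝ)) (k : ℝ), MeasurableSet S → S ⊆ Tri c →
      ∫ v in Tri c, S.indicator (fun _ => k * 1) v = k * ∫ _v in S, (1 : ℝ) := by
    intro S k hS hST
    rw [setIntegral_indicator hS, Set.inter_eq_self_of_subset_right hST, integral_const_mul]
  have i12 : Integrable (fun v =>
      (rA1 c h).indicator (fun _ => (2 * c / 3 - (c - 1) * h) * 1) v +
      (rA2 c h).indicator (fun _ => (2 * c / 3 - (c - 1) * h) * 1) v)
      (volume.restrict (Tri c)) := (hi _ _ (mA1 c h)).add (hi _ _ (mA2 c h))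
  rw [integral_add i12 (hi _ _ (mW c h)),
    integral_add (hi _ _ (mA1 c h)) (hi _ _ (mA2 c h)),
    hv _ _ (mA1 c h) (fun v hv => hv.1), hv _ _ (mA2 c h) (fun v hv => hv.1),
    hv _ _ (mW c h) (fun v hv => hv.1), areaA1 hc h0 h1, areaA2 hc h0 h1, areaW hc h0 h1,
    ← mul_add]
  have hA : (1 - (2 * c / 3 - (c - 1) * h)) * h +
      (1 - 1 / c) * ((2 * c / 3 - (c - 1) * h) ^ 2 - (c * (2 / 3 - h)) ^ 2) / 2 +
      ((c - (2 * c / 3 - (c - 1) * h)) -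
      (c ^ 2 - (2 * c / 3 - (c - 1) * h) ^ 2) / (2 * c)) = c * (1 / 3 + h) / 3 := by
    have : (1 - (2 * c / 3 - (c - 1) * h)) * h +
      (1 - 1 / c) * ((2 * c / 3 - (c - 1) * h) ^ 2 - (c * (2 / 3 - h)) ^ 2) / 2 +
      ((c - (2 * c / 3 - (c - 1) * h)) -
      (c ^ 2 - (2 * c / 3 - (c - 1) * h) ^ 2) / (2 * c)) = c * (1 / 3 + h) / 3 +
        (9 * (c - 1) * h ^ 2 - c) / 18 := by
      field_simp; ring
    rw [this, hh]; ring
  rw [hA]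
  have : 2 / c * ((2 * c / 3 - (c - 1) * h) * (c * (1 / 3 + h) / 3) +
    2 / 3 * (c * (2 / 3 - h) / 3)) = 2 / 3 * ((2 * c / 3 - (c - 1) * h) * (1 / 3 + h) +
    2 / 3 * (2 / 3 - h)) := by field_simp
  rw [this]
  linear_combination (-2 / 27) * hh


/-- for `c > 4/3`, the menu
`{((0,0),0), ((1/c,1),2/3), ((1,1), 2c/3 - √(c(c-1))/3)}` has revenue exactly
`(2/27) * (4 + c + √(c(c-1)))` under the uniform distribution on `Tri c`;
moreover, every IC and IR direct mechanism has revenue at most this value,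
so this menu is revenue-optimal. -/
theorem triangle_menu_optimal (c : ℝ) (hc : 4 / 3 < c) :
    revTri c {(((0 : ℝ), (0 : ℝ)), (0 : ℝ)),
              (((1 / c : ℝ), (1 : ℝ)), (2 / 3 : ℝ)),
              (((1 : ℝ), (1 : ℝ)), 2 * c / 3 - Real.sqrt (c * (c - 1)) / 3)}
        = (2 / 27) * (4 + c + Real.sqrt (c * (c - 1))) ∧
    ∀ (x : ℝ × ℝ → ℝ × ℝ) (p : ℝ × ℝ → ℝ),
      (∀ v ∈ Tri c, (x v).1 ∈ Set.Icc (0 : ℝ) 1 ∧ (x v).2 ∈ Set.Icc (0 : ℝ) 1) →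
      (∀ v ∈ Tri c, ∀ v' ∈ Tri c,
        v.1 * (x v').1 + v.2 * (x v').2 - p v' ≤ v.1 * (x v).1 + v.2 * (x v).2 - p v) →
      (∀ v ∈ Tri c, 0 ≤ v.1 * (x v).1 + v.2 * (x v).2 - p v) →
      ∫ v, p v ∂(triMeasure c) ≤ (2 / 27) * (4 + c + Real.sqrt (c * (c - 1))) := by
  have hc1 : 1 < c := by linarith
  have hc0 : 0 < c := by linarith
  have hs0 : 0 < Real.sqrt (c * (c - 1)) := Real.sqrt_pos.2 (by nlinarith)
  have hsq : Real.sqrt (c * (c - 1)) ^ 2 = c * (c - 1) := Real.sq_sqrt (by nlinarith)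
  obtain ⟨h, hh⟩ : ∃ h, Real.sqrt (c * (c - 1)) = 3 * (c - 1) * h :=
    ⟨Real.sqrt (c * (c - 1)) / (3 * (c - 1)), by
      have : c - 1 ≠ 0 := by linarith
      field_simp⟩
  rw [hh] at hs0 hsq ⊢
  have h0 : 0 < h := pos_of_mul_pos_right hs0 (by linarith)
  have hq : 9 * (c - 1) * h ^ 2 = c := by
    have : (c - 1) * (9 * (c - 1) * h ^ 2) = (c - 1) * c := by linarith
    exact mul_left_cancel₀ (by linarith) this
  have h1 : h ≤ 2 / 3 := by
    by_contra hlt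
    push Not at hlt
    nlinarith
  have hsm : ∀ f : ℝ × ℝ → ℝ, ∫ v, f v ∂(triMeasure c) = 2 / c * ∫ v in Tri c, f v := by
    intro f
    unfold triMeasure
    rw [integral_smul_measure, ENNReal.toReal_ofReal (by positivity), smul_eq_mul]
  refine ⟨?_, ?_⟩
  · unfold revTri
    rw [hsm]
    have hP : 2 * c / 3 - 3 * (c - 1) * h / 3 = 2 * c / 3 - (c - 1) * h := by ring
    rw [hP]
    exact menu_rev hc1 h0 h1 hq
  · intro x p hx hic hir
    rw [hsm]
    have hval : 2 / c * (c / 27 * (4 + c + 3 * (c - 1) * h)) =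
        2 / 27 * (4 + c + 3 * (c - 1) * h) := by field_simp
    rw [← hval]
    apply mul_le_mul_of_nonneg_left _ (by positivity)
    by_cases hp : IntegrableOn p (Tri c)
    · obtain ⟨u, hu, hle⟩ := mech_bound hc0 x p hx hic hir hp
      exact hle.trans (dual_bound hc1 h0 h1 hq hu)
    · rw [integral_undef hp]
      have : 0 < c - 1 := by linarith
      positivity
end
end

section
/- Let 1 ≤ c ≤ 4/3. The menu M = {((0,0),0), ((1,1),sqrt(c/3))}, which posts price sqrt(c/3) for the bundle of both items, has revenue exactly (2/3)*sqrt(c/3) under the uniform distribution μ on the triangle T = {(v1,v2) : v1 ≥ 0, v2 ≥ 0, v1/c + v2 ≤ 1}. -/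
open MeasureTheory Real

noncomputable section

theorem bp_eq (p : ℝ) (hp : 0 ≤ p) (v : ℝ × ℝ) :
    buyerPrice {(((0 : ℝ), (0 : ℝ)), (0 : ℝ)), (((1 : ℝ), (1 : ℝ)), p)} v
      = Set.indicator {v : ℝ × ℝ | p ≤ v.1 + v.2} (fun _ => p) v := by
  classical
  unfold buyerPrice
  by_cases h : p ≤ v.1 + v.2
  · rw [Set.indicator_of_mem (by exact h)]
    apply IsGreatest.csSup_eq
    constructor
    · refine ⟨(((1 : ℝ), (1 : ℝ)), p), by simp, rfl, ?_⟩
      intro it' hit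
      simp only [Finset.mem_insert, Finset.mem_singleton] at hit
      rcases hit with rfl | rfl <;> simp [util]
      linarith
    · rintro q ⟨it, hit, rfl, -⟩
      simp only [Finset.mem_insert, Finset.mem_singleton] at hit
      rcases hit with rfl | rfl <;> simp [hp]
  · rw [Set.indicator_of_notMem (by exact h)]
    apply IsGreatest.csSup_eq
    constructor
    · refine ⟨(((0 : ℝ), (0 : ℝ)), (0 : ℝ)), by simp, rfl, ?_⟩
      intro it' hit
      simp only [Finset.mem_insert, Finset.mem_singleton] at hit
      rcases hit with rfl | rfl <;> simp [util]
      linarith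
    · rintro q ⟨it, hit, rfl, hm⟩
      simp only [Finset.mem_insert, Finset.mem_singleton] at hit
      rcases hit with rfl | rfl
      · simp
      · have := hm (((0 : ℝ), (0 : ℝ)), (0 : ℝ)) (by simp)
        simp [util] at this
        exact absurd this h

theorem vol_eq (c p : ℝ) (hc : 1 ≤ c) (hp : 0 ≤ p) (hp1 : p ≤ 1) :
    volume ({v : ℝ × ℝ | p ≤ v.1 + v.2} ∩ Tri c) = ENNReal.ofReal (c / 2 - p ^ 2 / 2) := by
  have hc0 : 0 < c := by linarith
  have hmeas : MeasurableSet ({v : ℝ × ℝ | p ≤ v.1 + v.2} ∩ Tri c) := by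
    apply IsClosed.measurableSet
    apply IsClosed.inter
    · exact isClosed_le (by fun_prop) (by fun_prop)
    · have h1 : IsClosed {v : ℝ × ℝ | 0 ≤ v.1} := isClosed_le (by fun_prop) (by fun_prop)
      have h2 : IsClosed {v : ℝ × ℝ | 0 ≤ v.2} := isClosed_le (by fun_prop) (by fun_prop)
      have h3 : IsClosed {v : ℝ × ℝ | v.1 / c + v.2 ≤ 1} :=
        isClosed_le (by fun_prop) (by fun_prop)
      exact h1.inter (h2.inter h3)
  rw [Measure.volume_eq_prod, Measure.prod_apply hmeas]
  have hsec : ∀ x : ℝ, volume (Prod.mk x ⁻¹' ({v : ℝ × ℝ | p ≤ v.1 + v.2} ∩ Tri c))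
      = (Set.Icc 0 c).indicator (fun x => ENNReal.ofReal (1 - x / c - max 0 (p - x))) x := by
    intro x
    by_cases hx : x ∈ Set.Icc 0 c
    · rw [Set.indicator_of_mem hx, ← Real.volume_Icc]
      congr 1
      ext y
      simp only [Tri, Set.mem_preimage, Set.mem_inter_iff, Set.mem_ofPred_eq, Set.mem_Icc,
        max_le_iff]
      have := hx.1
      constructor
      · rintro ⟨h1, h2, h3, h4⟩
        exact ⟨⟨h3, by linarith⟩, by linarith⟩
      · rintro ⟨⟨h1, h2⟩, h3⟩
        exact ⟨by linarith, this, h1, by linarith⟩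
    · rw [Set.indicator_of_notMem hx]
      convert measure_empty (μ := (volume : Measure ℝ))
      rw [Set.eq_empty_iff_forall_notMem]
      rintro y ⟨h1, h2, h3, h4⟩
      simp only at h2 h3 h4
      apply hx
      refine ⟨h2, ?_⟩
      have : x / c ≤ 1 := by linarith
      rwa [div_le_one hc0] at this
  simp_rw [hsec]
  rw [lintegral_indicator measurableSet_Icc]
  have hcont : Continuous (fun x : ℝ => 1 - x / c - max 0 (p - x)) := by fun_prop
  rw [← ofReal_integral_eq_lintegral_ofReal (hcont.integrableOn_Icc)]
  · congr 1
    rw [integral_Icc_eq_integral_Ioc, ← intervalIntegral.integral_of_le hc0.le]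
    have hc2 : Continuous (fun x : ℝ => max 0 (p - x)) := by fun_prop
    have hc1 : Continuous (fun x : ℝ => 1 - x / c) := by fun_prop
    rw [intervalIntegral.integral_sub (hc1.intervalIntegrable _ _) (hc2.intervalIntegrable _ _)]
    congr 1
    · rw [intervalIntegral.integral_sub (by simp) ((by fun_prop : Continuous (fun x : ℝ => x / c)).intervalIntegrable _ _)]
      simp
      field_simp
      ring
    · rw [← intervalIntegral.integral_add_adjacent_intervals
        (hc2.intervalIntegrable 0 p) (hc2.intervalIntegrable p c)]
      have e1 : ∫ x in (0:ℝ)..p, max 0 (p - x) = ∫ x in (0:ℝ)..p, (p - x) := by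
        apply intervalIntegral.integral_congr
        intro x hx
        rw [Set.uIcc_of_le hp] at hx
        exact max_eq_right (by linarith [hx.2])
      have e2 : ∫ x in p..c, max 0 (p - x) = ∫ x in p..c, (0:ℝ) := by
        apply intervalIntegral.integral_congr
        intro x hx
        rw [Set.uIcc_of_le (by linarith)] at hx
        exact max_eq_left (by linarith [hx.1])
      rw [e1, e2, intervalIntegral.integral_sub (by simp) (by simp)]
      simp
      ring
  · rw [Filter.EventuallyLE, ae_restrict_iff' measurableSet_Icc]
    refine Filter.Eventually.of_forall fun x hx => ?_
    have h1 : x / c ≤ 1 := by rw [div_le_one hc0]; exact hx.2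
    have h2 : x / c ≤ x := div_le_self hx.1 hc
    have : max 0 (p - x) ≤ 1 - x / c := max_le (by linarith) (by linarith)
    simp only [Pi.zero_apply]
    linarith

/-- for `1 ≤ c ≤ 4/3`, the menu `{((0,0),0), ((1,1),√(c/3))}`,
posting price `√(c/3)` for the bundle, has revenue exactly `(2/3) * √(c/3)`
under the uniform distribution on the triangle `Tri c`. -/
theorem triangle_bundle_menu_revenue (c : ℝ) (hc1 : 1 ≤ c) (hc2 : c ≤ 4 / 3) :
    revTri c {(((0 : ℝ), (0 : ℝ)), (0 : ℝ)),
              (((1 : ℝ), (1 : ℝ)), Real.sqrt (c / 3))}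
      = (2 / 3) * Real.sqrt (c / 3) := by
  have hp : 0 ≤ Real.sqrt (c / 3) := Real.sqrt_nonneg _
  have hsq : Real.sqrt (c / 3) ^ 2 = c / 3 := Real.sq_sqrt (by linarith)
  have hp1 : Real.sqrt (c / 3) ≤ 1 := by
    nlinarith
  have hS : MeasurableSet {v : ℝ × ℝ | Real.sqrt (c / 3) ≤ v.1 + v.2} :=
    (isClosed_le (by fun_prop) (by fun_prop)).measurableSet
  unfold revTri triMeasure
  simp_rw [bp_eq _ hp]
  rw [integral_smul_measure, integral_indicator hS, setIntegral_const, measureReal_def,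
    Measure.restrict_apply hS, vol_eq c _ hc1 hp hp1, hsq,
    ENNReal.toReal_ofReal (by positivity), ENNReal.toReal_ofReal (by linarith)]
  simp only [smul_eq_mul]
  field_simp
  ring
end
end

section
/- Let c > 4/3, p3 = (2c)/3 − (1/3)*sqrt(c*(c−1)), and xD = (2c)/3 − (1/3)*sqrt(c*(c−1)) − (1/3)*sqrt(c/(c−1)). Let R3 = {v ∈ T : v1 + v2 − p3 ≥ 0 and v1 + v2 − p3 ≥ v1/c + v2 − 2/3}, let ν+ be the pushforward of the measure (2/c)·(Lebesgue measure on the interval [xD, c]) under the map t ↦ (t, 1 − t/c), and let ν− be (6/c) times Lebesgue measure restricted to R3. Then there exists a nonnegative measure γ on R3 × R3 whose first marginal is ν+ and whose second marginal is ν−, and which is supported on the set {(v, v') : v1 ≥ v'1 and v2 ≥ v'2}. (In transport language: the mass of ν+ can be moved to ν− so that mass only moves weakly downward and weakly leftward.) -/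
open MeasureTheory Real

noncomputable section

lemma aux_integral (c s q t : ℝ) (hc : 4 / 3 < c) (hs : 0 < s) (hs2 : s * s = c * (c - 1))
    (hq : q * (c - 1) = s) (ht : c * (2 - q) / 3 ≤ t) :
    ∫ x in (c * (2 - q) / 3)..t, (1 - x / c - max ((2 * c - s) / 3 - x)
      (1 - (c * (2 - q) / 3 + c / 3 + (c - s) * (t - c * (2 - q) / 3)) / c)) =
      (t - c * (2 - q) / 3) / 3 := by
  have hc0 : 0 < c := by linarith
  have hsc : s < c := by nlinarith
  obtain ⟨a, ha⟩ : ∃ a, a = c * (2 - q) / 3 := ⟨_, rfl⟩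
  obtain ⟨u, hu⟩ : ∃ u, u = t - a := ⟨_, rfl⟩
  obtain ⟨y, hy⟩ : ∃ y, y = 1 - (a + c / 3 + (c - s) * u) / c := ⟨_, rfl⟩
  obtain ⟨m, hm⟩ : ∃ m, m = (c - s) * u / c := ⟨_, rfl⟩
  rw [← ha] at ht ⊢
  rw [← hu, ← hy]
  have hu0 : 0 ≤ u := by linarith
  have hm0 : 0 ≤ m := by rw [hm]; apply div_nonneg (mul_nonneg _ hu0) <;> linarith
  have hmc : m * c = (c - s) * u := by rw [hm]; field_simp
  have hmu : m ≤ u := by nlinarith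
  have hyc : y * c = c - (a + c / 3 + (c - s) * u) := by rw [hy]; field_simp
  have hqc : q * c = s + q := by linarith
  have hy2 : y = (2 * c - s) / 3 - (a + m) := by
    have : (y - ((2 * c - s) / 3 - (a + m))) * c = 0 := by
      have e : a * 3 = 2 * c - (s + q) := by rw [ha, ← hqc]; ring
      have e2 : a * 3 = 2 * c - q * c := by rw [ha]; ring
      have : (y - ((2 * c - s) / 3 - (a + m))) * c = y * c - (2 * c - s) / 3 * c + a * c + m * c := by
        ring
      rw [this, hyc, hmc]
      have ea : a * c = (2 * c - (s + q)) * c / 3 := by rw [← e]; ring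
      rw [ea]; linarith [mul_comm q c]
    have := (mul_eq_zero.1 this).resolve_right hc0.ne'
    linarith
  have hcont : Continuous fun x : ℝ => (1 - x / c - max ((2 * c - s) / 3 - x) y) := by fun_prop
  rw [← intervalIntegral.integral_add_adjacent_intervals (b := a + m)
    (hcont.intervalIntegrable _ _) (hcont.intervalIntegrable _ _)]
  have e1 : ∫ x in a..(a + m), (1 - x / c - max ((2 * c - s) / 3 - x) y) =
      ∫ x in a..(a + m), ((1 - (2 * c - s) / 3) + (1 - 1 / c) * x) := by
    apply intervalIntegral.integral_congr
    intro x hx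
    rw [Set.uIcc_of_le (by linarith)] at hx
    simp only
    rw [max_eq_left (by linarith [hx.2])]
    ring
  have e2 : ∫ x in (a + m)..t, (1 - x / c - max ((2 * c - s) / 3 - x) y) =
      ∫ x in (a + m)..t, ((1 - y) + (- 1 / c) * x) := by
    apply intervalIntegral.integral_congr
    intro x hx
    rw [Set.uIcc_of_le (by linarith)] at hx
    simp only
    rw [max_eq_right (by linarith [hx.1])]
    ring
  rw [e1, e2, intervalIntegral.integral_add (by simp) ((by fun_prop : Continuous _).intervalIntegrable _ _),
    intervalIntegral.integral_add (by simp) ((by fun_prop : Continuous _).intervalIntegrable _ _),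
    intervalIntegral.integral_const_mul, intervalIntegral.integral_const_mul,
    intervalIntegral.integral_const, intervalIntegral.integral_const, integral_id, integral_id]
  simp only [smul_eq_mul]
  have ht2 : t = a + u := by linarith
  have ea : a = (2 * c - (s + q)) / 3 := by rw [ha, ← hqc]; ring
  have ec : a / c = (2 - q) / 3 := by rw [ha]; field_simp
  have f : 1 - (2 * c - s) / 3 + a - 1 / c * a = 1 / 3 := by
    have : 1 / c * a = (2 - q) / 3 := by rw [← ec]; ring
    rw [this, ea]; ring
  have g : m * u - m ^ 2 / 2 = 1 / c * u ^ 2 / 2 := by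
    rw [hm]; field_simp
    linear_combination (-u ^ 2) * hs2
  rw [hy2, ht2]
  linear_combination u * f + g

lemma aux_h (c s q t : ℝ) (hc : 4 / 3 < c) (hs : 0 < s) (hs2 : s * s = c * (c - 1))
    (hq : q * (c - 1) = s) (htc : t ≤ c) :
    t ≤ c * (2 - q) / 3 + c / 3 + (c - s) * (t - c * (2 - q) / 3) ∧
    c * (2 - q) / 3 + c / 3 + (c - s) * (t - c * (2 - q) / 3) ≤ c := by
  have hsc : s < c := by nlinarith
  have hsc1 : c - 1 < s := by nlinarith
  have hqs : q * s = c := by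
    have : (q * s - c) * (c - 1) = 0 := by linear_combination s * hq + hs2
    have := (mul_eq_zero.1 this).resolve_right (by linarith)
    linarith
  have e : c * (2 - q) / 3 + c / 3 + (c - s) * (t - c * (2 - q) / 3) = c - (c - s) * (c - t) := by
    linear_combination (c / 3) * hq - (c / 3) * hqs
  rw [e]
  constructor <;> nlinarith

lemma aux_area (c s q t : ℝ) (hc : 4 / 3 < c) (hs : 0 < s) (hs2 : s * s = c * (c - 1))
    (hq : q * (c - 1) = s) (ht : c * (2 - q) / 3 ≤ t) (htc : t ≤ c) :
    volume {v : ℝ × ℝ | (c * (2 - q) / 3 ≤ v.1 ∧ v.1 ≤ t) ∧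
      max ((2 * c - s) / 3 - v.1)
      (1 - (c * (2 - q) / 3 + c / 3 + (c - s) * (t - c * (2 - q) / 3)) / c) ≤ v.2 ∧
      v.2 ≤ 1 - v.1 / c} = ENNReal.ofReal ((t - c * (2 - q) / 3) / 3) := by
  have hc0 : 0 < c := by linarith
  rw [← aux_integral c s q t hc hs hs2 hq ht]
  have hsc : s < c := by nlinarith
  have hqc : q * c = s + q := by linarith
  have hqs : q * s = c := by
    have : (q * s - c) * (c - 1) = 0 := by linear_combination s * hq + hs2
    have := (mul_eq_zero.1 this).resolve_right (by linarith)
    linarith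
  have hhc := aux_h c s q t hc hs hs2 hq htc
  have ha : c * (2 - q) / 3 = (2 * c - (s + q)) / 3 := by rw [← hqc]; ring
  have hac : c * (2 - q) / 3 / c = (2 - q) / 3 := by field_simp
  obtain ⟨a, haa⟩ : ∃ a, a = c * (2 - q) / 3 := ⟨_, rfl⟩
  rw [← haa] at ht ha hhc hac ⊢
  obtain ⟨H, hH⟩ : ∃ H, H = (a + c / 3 + (c - s) * (t - a)) := ⟨_, rfl⟩
  rw [← hH] at hhc ⊢
  have hmeas : MeasurableSet {v : ℝ × ℝ | (a ≤ v.1 ∧ v.1 ≤ t) ∧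
      max ((2 * c - s) / 3 - v.1) (1 - H / c) ≤ v.2 ∧ v.2 ≤ 1 - v.1 / c} := by
    measurability
  rw [intervalIntegral.integral_of_le ht, ← integral_Icc_eq_integral_Ioc,
    ofReal_integral_eq_lintegral_ofReal, Measure.volume_eq_prod, Measure.prod_apply hmeas,
    ← lintegral_indicator measurableSet_Icc]
  · congr 1
    ext x
    by_cases hx : x ∈ Set.Icc a t
    · rw [Set.indicator_of_mem hx, ← Real.volume_Icc]
      congr 1
      ext z
      simp [hx.1, hx.2]
    · rw [Set.indicator_of_notMem hx]
      convert measure_empty (μ := (volume : Measure ℝ))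
      ext z
      simp only [Set.mem_preimage, Set.mem_ofPred_eq, Set.mem_empty_iff_false, iff_false]
      exact fun h => hx h.1
  · exact (by fun_prop : Continuous _).integrableOn_Icc
  · filter_upwards [ae_restrict_mem measurableSet_Icc] with x hx
    have h1 : x / c ≤ H / c := by gcongr; linarith [hx.2]
    have h2 : (x - a) / c ≤ x - a := div_le_self (by linarith [hx.1]) (by linarith)
    rw [sub_div] at h2
    simp only [Pi.zero_apply, sub_nonneg]
    apply max_le <;> linarith

lemma aux_fin (c s q : ℝ) (hc : 4 / 3 < c) (hs : 0 < s) (hs2 : s * s = c * (c - 1))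
    (hq : q * (c - 1) = s) (a p : ℝ) (ha : a = c * (2 - q) / 3) (hp : p = (2 * c - s) / 3)
    (R : Set (ℝ × ℝ)) (hR : R = {v ∈ Tri c | 0 ≤ v.1 + v.2 - p ∧
      v.1 / c + v.2 - 2 / 3 ≤ v.1 + v.2 - p}) :
    ∃ γ : Measure ((ℝ × ℝ) × (ℝ × ℝ)),
      γ.map Prod.fst = Measure.map (fun t : ℝ => (t, 1 - t / c))
        (ENNReal.ofReal (2 / c) • volume.restrict (Set.Icc a c)) ∧
      γ.map Prod.snd = ENNReal.ofReal (6 / c) • volume.restrict R ∧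
      γ {w : (ℝ × ℝ) × (ℝ × ℝ) |
          ¬ (w.1 ∈ R ∧ w.2 ∈ R ∧ w.2.1 ≤ w.1.1 ∧ w.2.2 ≤ w.1.2)} = 0 := by
  have hc0 : 0 < c := by linarith
  have hsc : s < c := by nlinarith
  have hqc : q * c = s + q := by linarith
  have hqs : q * s = c := by
    have : (q * s - c) * (c - 1) = 0 := by linear_combination s * hq + hs2
    have := (mul_eq_zero.1 this).resolve_right (by linarith)
    linarith
  have hq2 : q < 2 := by
    have : (2 * (c - 1)) ^ 2 > s ^ 2 := by nlinarith
    have := lt_of_pow_lt_pow_left₀ 2 (by linarith) this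
    nlinarith
  have hq0 : 0 < q := by
    by_contra h
    nlinarith
  have ha0 : 0 < a := by rw [ha]; apply div_pos (mul_pos hc0 _) <;> linarith
  have hac : a ≤ c := by rw [ha]; nlinarith
  have hk : 0 < c - s := by linarith
  have hRm : MeasurableSet R := by
    rw [hR]; unfold Tri; measurability
  have hRx : ∀ v : ℝ × ℝ, (v.1 / c + v.2 - 2 / 3 ≤ v.1 + v.2 - p) ↔ a ≤ v.1 := by
    intro v
    have e : v.1 + v.2 - p - (v.1 / c + v.2 - 2 / 3) = (v.1 - a) * ((c - 1) / c) := by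
      rw [hp, ha]; field_simp
      linear_combination (-c) * hq
    have : 0 < (c - 1) / c := div_pos (by linarith) hc0
    rw [← sub_nonneg, e, mul_nonneg_iff_of_pos_right this, sub_nonneg]
  have hRv : ∀ v : ℝ × ℝ, v ∈ R ↔ a ≤ v.1 ∧ 0 ≤ v.2 ∧ v.2 ≤ 1 - v.1 / c ∧ p - v.1 ≤ v.2 := by
    intro v
    rw [hR]
    simp only [Tri, Set.mem_ofPred_eq, hRx]
    constructor
    · rintro ⟨⟨h1, h2, h3⟩, h4, h5⟩
      exact ⟨h5, h2, by linarith, by linarith⟩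
    · rintro ⟨h1, h2, h3, h4⟩
      exact ⟨⟨by linarith, h2, by linarith⟩, by linarith, h1⟩
  let T : ℝ × ℝ → ℝ := fun v => max v.1 ((c * (1 - v.2) - a - c / 3) / (c - s) + a)
  have hTm : Measurable T := by fun_prop
  have hTle : ∀ v t, T v ≤ t ↔ v.1 ≤ t ∧ c * (1 - v.2) ≤ a + c / 3 + (c - s) * (t - a) := by
    intro v t
    simp only [T, max_le_iff]
    rw [← le_sub_iff_add_le, div_le_iff₀ hk]
    constructor <;> rintro ⟨h1, h2⟩ <;> exact ⟨h1, by linarith⟩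
  have hT1 : ∀ v, v.1 ≤ T v := fun v => le_max_left _ _
  have hTb : ∀ v ∈ R, T v ≤ c * (1 - v.2) := by
    intro v hv
    rw [hRv] at hv
    rw [hTle]
    constructor
    · have := hv.2.2.1
      have h3 : v.1 / c ≤ 1 - v.2 := by linarith
      rw [div_le_iff₀ hc0] at h3
      linarith
    · have := aux_h c s q (c * (1 - v.2)) hc hs hs2 hq (by nlinarith [hv.2.1])
      rw [← ha] at this
      exact this.1
  have hTc : ∀ v ∈ R, T v ≤ c := by
    intro v hv
    have := hTb v hv
    have h0 := ((hRv v).1 hv).2.1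
    nlinarith
  have area : ∀ t, a ≤ t → t ≤ c → volume (T ⁻¹' Set.Iic t ∩ R) = ENNReal.ofReal ((t - a) / 3) := by
    intro t hat htc
    have h := aux_area c s q t hc hs hs2 hq (by rw [← ha]; exact hat) htc
    have hh := aux_h c s q t hc hs hs2 hq htc
    rw [← ha] at h hh
    rw [← h]
    congr 1
    ext v
    rw [Set.mem_inter_iff, hRv, Set.mem_preimage, Set.mem_Iic, hTle, Set.mem_ofPred_eq, max_le_iff,
      ← hp]
    obtain ⟨H, hH⟩ : ∃ H, H = (a + c / 3 + (c - s) * (t - a)) := ⟨_, rfl⟩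
    rw [← hH] at hh ⊢
    have e : c * (1 - v.2) ≤ H ↔ 1 - H / c ≤ v.2 := by
      rw [mul_comm, ← le_div_iff₀ hc0]
      constructor <;> intro h <;> linarith
    rw [e]
    have : H / c ≤ 1 := by rw [div_le_one hc0]; exact hh.2
    constructor
    · rintro ⟨⟨h1, h2⟩, h3, h4, h5, h6⟩
      exact ⟨⟨h3, h1⟩, ⟨h6, h2⟩, h5⟩
    · rintro ⟨⟨h3, h1⟩, ⟨h6, h2⟩, h5⟩
      exact ⟨⟨h1, h2⟩, h3, by linarith, h5, h6⟩
  have hvR : volume R = ENNReal.ofReal ((c - a) / 3) := by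
    rw [← area c hac le_rfl]
    congr 1
    ext v
    exact ⟨fun h => ⟨hTc v h, h⟩, fun h => h.2⟩
  have hmap : Measure.map T (ENNReal.ofReal (6 / c) • volume.restrict R) =
      ENNReal.ofReal (2 / c) • volume.restrict (Set.Icc a c) := by
    have : IsFiniteMeasure (volume.restrict R) := ⟨by simp [hvR]⟩
    have : IsFiniteMeasure (ENNReal.ofReal (6 / c) • volume.restrict R) :=
      Measure.smul_finite _ ENNReal.ofReal_ne_top
    apply Measure.ext_of_Iic
    intro t
    rw [Measure.map_apply hTm measurableSet_Iic, Measure.smul_apply, Measure.smul_apply,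
      Measure.restrict_apply (hTm measurableSet_Iic), Measure.restrict_apply measurableSet_Iic,
      smul_eq_mul, smul_eq_mul]
    by_cases hat : a ≤ t
    · have e1 : T ⁻¹' Set.Iic t ∩ R = T ⁻¹' Set.Iic (min t c) ∩ R := by
        ext v
        simp only [Set.mem_inter_iff, Set.mem_preimage, Set.mem_Iic, le_min_iff]
        exact ⟨fun h => ⟨⟨h.1, hTc v h.2⟩, h.2⟩, fun h => ⟨h.1.1, h.2⟩⟩
      have e2 : Set.Iic t ∩ Set.Icc a c = Set.Icc a (min t c) := by
        ext x
        simp only [Set.mem_inter_iff, Set.mem_Iic, Set.mem_Icc, le_min_iff]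
        tauto
      rw [e1, e2, area _ (le_min hat hac) (min_le_right _ _), Real.volume_Icc,
        ← ENNReal.ofReal_mul (by positivity), ← ENNReal.ofReal_mul (by positivity)]
      congr 1
      ring
    · have e1 : T ⁻¹' Set.Iic t ∩ R = ∅ := by
        ext v
        simp only [Set.mem_inter_iff, Set.mem_preimage, Set.mem_Iic, Set.mem_empty_iff_false,
          iff_false]
        rintro ⟨h1, h2⟩
        exact hat (((hRv v).1 h2).1.trans ((hT1 v).trans h1))
      have e2 : Set.Iic t ∩ Set.Icc a c = ∅ := by
        ext x
        simp only [Set.mem_inter_iff, Set.mem_Iic, Set.mem_Icc, Set.mem_empty_iff_false,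
          iff_false]
        rintro ⟨h1, h2, h3⟩
        exact hat (h2.trans h1)
      rw [e1, e2]
      simp
  have hG : Measurable fun t : ℝ => (t, 1 - t / c) := by fun_prop
  have hF : Measurable fun v : ℝ × ℝ => ((T v, 1 - T v / c), v) := by fun_prop
  refine ⟨Measure.map (fun v : ℝ × ℝ => ((T v, 1 - T v / c), v))
    (ENNReal.ofReal (6 / c) • volume.restrict R), ?_, ?_, ?_⟩
  · rw [← hmap, Measure.map_map measurable_fst hF, Measure.map_map hG hTm]
    rfl
  · rw [Measure.map_map measurable_snd hF]
    exact Measure.map_id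
  · change ∀ᵐ w ∂_, _
    have hS : MeasurableSet {w : (ℝ × ℝ) × (ℝ × ℝ) |
        w.1 ∈ R ∧ w.2 ∈ R ∧ w.2.1 ≤ w.1.1 ∧ w.2.2 ≤ w.1.2} := by
      have h1 : MeasurableSet {w : (ℝ × ℝ) × (ℝ × ℝ) | w.2.1 ≤ w.1.1} :=
        measurableSet_le (by fun_prop) (by fun_prop)
      have h2 : MeasurableSet {w : (ℝ × ℝ) × (ℝ × ℝ) | w.2.2 ≤ w.1.2} :=
        measurableSet_le (by fun_prop) (by fun_prop)
      exact (measurable_fst hRm).inter ((measurable_snd hRm).inter (h1.inter h2))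
    rw [ae_map_iff hF.aemeasurable hS]
    apply Measure.ae_smul_measure
    filter_upwards [ae_restrict_mem hRm] with v hv
    have h1 := hT1 v
    have h2 := hTb v hv
    have h3 := (hRv v).1 hv
    have h4 : v.2 ≤ 1 - T v / c := by
      have : T v / c ≤ 1 - v.2 := by rw [div_le_iff₀ hc0]; linarith
      linarith
    refine ⟨(hRv _).2 ⟨?_, ?_, ?_, ?_⟩, hv, h1, h4⟩
    · exact h3.1.trans h1
    · exact h3.2.1.trans h4
    · exact le_rfl
    · simp only
      linarith [h3.2.2.2]

/-- Lemma on `R₃`: for `c > 4/3`, the boundary measure `ν₊` on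
the hypotenuse part of `R₃` can be transported to the interior measure `ν₋`
moving mass only weakly downward and weakly leftward. -/
theorem exists_monotone_transport_R3 (c : ℝ) (hc : 4 / 3 < c) :
    let p3 : ℝ := 2 * c / 3 - Real.sqrt (c * (c - 1)) / 3
    let xD : ℝ := 2 * c / 3 - Real.sqrt (c * (c - 1)) / 3 - Real.sqrt (c / (c - 1)) / 3
    let R3 : Set (ℝ × ℝ) :=
      {v ∈ Tri c | 0 ≤ v.1 + v.2 - p3 ∧ v.1 / c + v.2 - 2 / 3 ≤ v.1 + v.2 - p3}
    let νp : Measure (ℝ × ℝ) :=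
      Measure.map (fun t : ℝ => (t, 1 - t / c))
        (ENNReal.ofReal (2 / c) • volume.restrict (Set.Icc xD c))
    let νm : Measure (ℝ × ℝ) := ENNReal.ofReal (6 / c) • volume.restrict R3
    ∃ γ : Measure ((ℝ × ℝ) × (ℝ × ℝ)),
      γ.map Prod.fst = νp ∧ γ.map Prod.snd = νm ∧
      γ {w : (ℝ × ℝ) × (ℝ × ℝ) |
          ¬ (w.1 ∈ R3 ∧ w.2 ∈ R3 ∧ w.2.1 ≤ w.1.1 ∧ w.2.2 ≤ w.1.2)} = 0 := by
  intro p3 xD R3 νp νm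
  have hc0 : 0 < c := by linarith
  have hc1 : 0 < c - 1 := by linarith
  have hs : 0 < Real.sqrt (c * (c - 1)) := Real.sqrt_pos.2 (mul_pos hc0 hc1)
  have hs2 := Real.mul_self_sqrt (mul_pos hc0 hc1).le
  have hq : Real.sqrt (c / (c - 1)) * (c - 1) = Real.sqrt (c * (c - 1)) := by
    have : c * (c - 1) = c / (c - 1) * (c - 1) ^ 2 := by field_simp
    rw [this, Real.sqrt_mul (by positivity), Real.sqrt_sq hc1.le]
  refine aux_fin c _ _ hc hs hs2 hq xD p3 ?_ ?_ R3 rfl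
  · simp only [xD]
    linear_combination (1 / 3) * hq
  · simp only [p3]
    ring
end
end
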